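/- Consider the general Curie–Weiss model CW(ρ) at inverse temperature β=1, where ρ is a symmetric probability measure on ℝ with ∫x²dρ(x)=1, ρ([−L,L])=1 for some finite L, the function h(s)=s²/2 − log∫e^{sx}dρ(x) has s=0 as the unique root of h'(s)=0, and there is k≥2 with h^{(i)}(0)=0 for 0≤i≤2k−1 and h^{(2k)}(0)>0. Let W = n^{1/(2k)}·m(X), where m(X) = (X₁+⋯+Xₙ)/n, and let Y have density p(y) = c₁·exp(−h^{(2k)}(0)·y^{2k}/(2k)!) with normalizing constant c₁. Then there is a constant C>0 depending only on ρ such that |P(W ≥ z)/P(Y ≥ z) − 1| ≤ C·n^{−1/k}·(1+z^{2k+2}) uniformly for z ∈ (0, n^{1/(k(2k+2))}). -/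

import Mathlib

open MeasureTheory Real

/-- The Gibbs measure of the general Curie–Weiss model `CW(ρ)` at inverse
temperature `β = 1`:
`dPₙ(x) = Zₙ⁻¹ exp((1/(2n)) (x₁+⋯+xₙ)²) ∏ᵢ dρ(xᵢ)`. -/
noncomputable def cwMeasure (ρ : Measure ℝ) [IsProbabilityMeasure ρ] (n : ℕ) :
    Measure (Fin n → ℝ) :=
  (Measure.pi fun _ : Fin n => ρ).withDensity fun x =>
    ENNReal.ofReal (Real.exp ((∑ i, x i) ^ 2 / (2 * n)) /
      ∫ y : Fin n → ℝ, Real.exp ((∑ i, y i) ^ 2 / (2 * n))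
        ∂(Measure.pi fun _ : Fin n => ρ))

/-- `h(s) = s²/2 − log ∫ e^{sx} dρ(x)`. -/
noncomputable def hfun (ρ : Measure ℝ) (s : ℝ) : ℝ :=
  s ^ 2 / 2 - Real.log (∫ x, Real.exp (s * x) ∂ρ)

/-!
The Curie–Weiss interaction is removed by the Hubbard–Stratonovich transform: give a total spin `s`
and an auxiliary real field `θ` the joint weight `exp (θ s - n θ² / 2)` with respect to the free
spins. Then `s` has its Curie–Weiss law and `n θ = s + Z` with an independent noise `Z ∼ N(0, n)`,
while the field has density proportional to `exp (-n h(θ))` and, given `θ`, the total spin is a sum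
of independent bounded spins with mean `n (θ - h'(θ))` and variance `n (1 - h''(θ))`.

The tails of `s` and of `n θ` are compared by Stein's method, with a test function whose derivative
is the unit step minus its average over `Z`. Since that function is concentrated near the step and
`h'`, `h''` are of order `θ ^ (2k-1)`, `θ ^ (2k-2)`, the error at level `n y` is at most a constant
times `y ^ (2k-1) + 1 / n` times the density of the field at `y`. Finally, in the variable
`v = n ^ (1 / (2k)) θ` the weight `exp (-n h)` is a relative perturbation of `exp (-a v ^ (2k))` of
order `n ^ (-1/k) v ^ (2k+2)`.
-/

open ProbabilityTheory Set
open scoped NNReal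

section FlatFunctions

variable {f : ℝ → ℝ} {m : ℕ}

theorem abs_sub_le_mul_of_abs_deriv_le {B x : ℝ} (hf : Differentiable ℝ f)
    (hB : ∀ y, |y| ≤ |x| → |deriv f y| ≤ B) : |f x - f 0| ≤ B * |x| := by
  have h := Convex.norm_image_sub_le_of_norm_deriv_le (f := f) (s := Icc (-|x|) |x|)
    (x := 0) (y := x) (fun y _ => hf y) (fun y hy => hB y (abs_le.2 hy)) (convex_Icc _ _)
    (by simp) (by simp [neg_abs_le, le_abs_self])
  simpa using h

theorem exists_abs_le_mul_abs_pow_of_abs_le_one (hf : ContDiff ℝ m f)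
    (h0 : ∀ i < m, iteratedDeriv i f 0 = 0) :
    ∃ C ≥ 0, ∀ x, |x| ≤ 1 → |f x| ≤ C * |x| ^ m := by
  induction m generalizing f with
  | zero =>
    obtain ⟨C, hC⟩ := (isCompact_Icc (a := (-1 : ℝ)) (b := 1)).exists_bound_of_continuousOn
      hf.continuous.continuousOn
    exact ⟨C, (norm_nonneg _).trans (hC 0 (by simp)), fun x hx => by simpa using hC x (abs_le.1 hx)⟩
  | succ m ih =>
    obtain ⟨hdiff, -, hderiv⟩ := (contDiff_succ_iff_deriv (n := m)).1 (by exact_mod_cast hf)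
    obtain ⟨C, hC0, hC⟩ := ih hderiv fun i hi => by
      rw [← iteratedDeriv_succ']; exact h0 (i + 1) (by lia)
    refine ⟨C, hC0, fun x hx => ?_⟩
    have hf0 : f 0 = 0 := by simpa using h0 0 (by lia)
    have hmvt := abs_sub_le_mul_of_abs_deriv_le hdiff (B := C * |x| ^ m) fun y hy =>
      (hC y (hy.trans hx)).trans (by gcongr)
    rwa [hf0, sub_zero, mul_assoc, ← pow_succ] at hmvt

theorem exists_abs_le_mul_abs_pow {A : ℝ} (hf : ContDiff ℝ m f)
    (h0 : ∀ i < m, iteratedDeriv i f 0 = 0) (hA : ∀ x, 1 ≤ |x| → |f x| ≤ A * |x| ^ m) :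
    ∃ C ≥ 0, ∀ x, |f x| ≤ C * |x| ^ m := by
  obtain ⟨C, hC0, hC⟩ := exists_abs_le_mul_abs_pow_of_abs_le_one hf h0
  refine ⟨max C A, le_max_of_le_left hC0, fun x => ?_⟩
  rcases le_total |x| 1 with hx | hx
  · exact (hC x hx).trans (by gcongr; exact le_max_left _ _)
  · exact (hA x hx).trans (by gcongr; exact le_max_right _ _)

theorem iteratedDeriv_zero_of_even_of_odd (hf : f.Even) (hm : Odd m) :
    iteratedDeriv m f 0 = 0 := by
  have h := iteratedDeriv_comp_neg m f 0
  rw [show (fun x => f (-x)) = f from funext hf, hm.neg_one_pow] at h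
  simp only [neg_zero, neg_smul, one_smul] at h
  linarith

end FlatFunctions

/-- `h` is an even potential well whose only minimum is `0`, where it has the degenerate behaviour
`h θ = a θ ^ (2 * k) + O(θ ^ (2 * k + 2))`; all the bounds hold on the whole line. -/
structure IsFlatWell (h : ℝ → ℝ) (k : ℕ) (a : ℝ) : Prop where
  coeff_pos : 0 < a
  contDiff : ContDiff ℝ 2 h
  even : h.Even
  deriv_le : ∃ C ≥ 0, ∀ θ, |deriv h θ| ≤ C * |θ| ^ (2 * k - 1)
  deriv_deriv_le : ∃ C ≥ 0, ∀ θ, |deriv (deriv h) θ| ≤ C * |θ| ^ (2 * k - 2)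
  sub_monomial_le : ∃ C ≥ 0, ∀ θ, |h θ - a * θ ^ (2 * k)| ≤ C * |θ| ^ (2 * k + 2)
  min_le : ∃ c > 0, ∀ θ, c * min (|θ| ^ (2 * k)) |θ| ≤ h θ

section Well

variable {h : ℝ → ℝ} {k : ℕ} {a L : ℝ}

theorem exists_half_mul_pow_le {C : ℝ} (ha : 0 < a) (hC : 0 ≤ C)
    (htaylor : ∀ θ, |h θ - a * θ ^ (2 * k)| ≤ C * |θ| ^ (2 * k + 2)) :
    ∃ ε > 0, ∀ θ, 0 ≤ θ → θ ≤ ε → a / 2 * θ ^ (2 * k) ≤ h θ := by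
  refine ⟨min 1 (a / (2 * (C + 1))), by positivity, fun θ h0 hε => ?_⟩
  have hlow := (abs_le.1 (htaylor θ)).1
  have h1 : θ ≤ 1 := hε.trans (min_le_left _ _)
  have h2 : θ * (2 * (C + 1)) ≤ a := (le_div_iff₀ (by positivity)).1 (hε.trans (min_le_right _ _))
  have h3 : C * θ ^ 2 ≤ a / 2 := by nlinarith [mul_nonneg hC h0]
  have h4 : C * |θ| ^ (2 * k + 2) ≤ a / 2 * θ ^ (2 * k) := by
    rw [abs_of_nonneg h0, pow_add, mul_comm (θ ^ (2 * k)), ← mul_assoc]; gcongr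
  linarith

theorem exists_mul_min_pow_le {C R : ℝ} (ha : 0 < a) (hC : 0 ≤ C)
    (htaylor : ∀ θ, |h θ - a * θ ^ (2 * k)| ≤ C * |θ| ^ (2 * k + 2))
    (hmono : MonotoneOn h (Ici 0)) (hR : ∀ θ, R ≤ θ → θ ≤ h θ) :
    ∃ c > 0, ∀ θ, 0 ≤ θ → c * min (θ ^ (2 * k)) θ ≤ h θ := by
  obtain ⟨ε, hε, hlow⟩ := exists_half_mul_pow_le ha hC htaylor
  have hhε : 0 < h ε := (by positivity : 0 < a / 2 * ε ^ (2 * k)).trans_le (hlow ε hε.le le_rfl)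
  set c := min (a / 2) (min (h ε / max R 1) 1)
  refine ⟨c, by positivity, fun θ hθ => ?_⟩
  rcases le_total θ ε with hθε | hεθ
  · calc c * min (θ ^ (2 * k)) θ ≤ a / 2 * θ ^ (2 * k) := by
          gcongr; exacts [min_le_left _ _, min_le_left _ _]
      _ ≤ h θ := hlow θ hθ hθε
  rcases le_total θ (max R 1) with hθR | hRθ
  · calc c * min (θ ^ (2 * k)) θ ≤ h ε / max R 1 * max R 1 := by
          gcongr
          exacts [(min_le_right _ _).trans (min_le_left _ _), (min_le_right _ _).trans hθR]
      _ = h ε := by field_simp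
      _ ≤ h θ := hmono hε.le hθ hεθ
  · calc c * min (θ ^ (2 * k)) θ ≤ 1 * θ := by
          gcongr
          exacts [(min_le_right _ _).trans (min_le_right _ _), min_le_right _ _]
      _ ≤ h θ := by rw [one_mul]; exact hR θ ((le_max_left _ _).trans hRθ)

theorem exists_abs_sub_monomial_le (hh : ContDiff ℝ (2 * k + 2 : ℕ) h) (heven : h.Even)
    (hk : 1 ≤ k) (hder : ∀ i ≤ 2 * k - 1, iteratedDeriv i h 0 = 0) {B : ℝ} (hB : 0 ≤ B)
    (hgrow : ∀ θ, 1 ≤ |θ| → |h θ| ≤ B * |θ| ^ 2) :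
    ∃ C ≥ 0, ∀ θ, |h θ - iteratedDeriv (2 * k) h 0 / (2 * k).factorial * θ ^ (2 * k)|
      ≤ C * |θ| ^ (2 * k + 2) := by
  set a := iteratedDeriv (2 * k) h 0 / (2 * k).factorial with ha
  refine exists_abs_le_mul_abs_pow (A := B + |a|) (hh.sub (by fun_prop)) (fun i hi => ?_)
    fun θ hθ => ?_
  · rw [iteratedDeriv_fun_sub ((hh.of_le (by exact_mod_cast hi.le)).contDiffAt) (by fun_prop),
      iteratedDeriv_const_mul_field, iteratedDeriv_fun_pow_zero]
    split_ifs with hi'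
    · subst hi'
      rw [ha]; field_simp; simp
    · rcases lt_or_gt_of_ne hi' with hlt | hgt
      · simp [hder i (by lia)]
      · obtain rfl : i = 2 * k + 1 := by lia
        simp [iteratedDeriv_zero_of_even_of_odd heven (odd_two_mul_add_one k)]
  · calc |h θ - a * θ ^ (2 * k)| ≤ |h θ| + |a| * |θ| ^ (2 * k) := by
          rw [← abs_pow, ← abs_mul]; exact abs_sub _ _
      _ ≤ B * |θ| ^ (2 * k + 2) + |a| * |θ| ^ (2 * k + 2) := by
          gcongr
          · exact (hgrow θ hθ).trans (by gcongr; lia)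
          · lia
      _ = (B + |a|) * |θ| ^ (2 * k + 2) := by ring

theorem abs_sub_sq_div_two_le (hh : Differentiable ℝ h) (h0 : h 0 = 0)
    (hderiv : ∀ θ, |deriv h θ - θ| ≤ L) (θ : ℝ) : |h θ - θ ^ 2 / 2| ≤ L * |θ| := by
  have hderiv' (x : ℝ) : HasDerivAt (fun x => h x - x ^ 2 / 2) (deriv h x - x) x :=
    ((hh x).hasDerivAt.sub (((hasDerivAt_id' x).fun_pow 2).div_const 2)).congr_deriv (by simp)
  simpa [h0] using abs_sub_le_mul_of_abs_deriv_le (x := θ) (fun x => (hderiv' x).differentiableAt)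
    fun x _ => (hderiv' x).deriv ▸ hderiv x

theorem monotoneOn_Ici_of_deriv_ne_zero (hh : ContDiff ℝ 1 h)
    (hderiv : ∀ θ, |deriv h θ - θ| ≤ L) (hroot : ∀ s, deriv h s = 0 → s = 0) :
    MonotoneOn h (Ici 0) := by
  refine monotoneOn_of_deriv_nonneg (convex_Ici 0) hh.continuous.continuousOn
    (hh.differentiable (by simp)).differentiableOn fun x hx => ?_
  rw [interior_Ici] at hx
  by_contra! hneg
  have hright : 0 ≤ deriv h (max x L) := by
    linarith [(abs_le.1 (hderiv (max x L))).1, le_max_right x L]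
  obtain ⟨s, hs, hs0⟩ := intermediate_value_Icc (le_max_left x L)
    (hh.continuous_deriv (by simp)).continuousOn ⟨hneg.le, hright⟩
  exact (hx.trans_le hs.1).ne' (hroot s hs0)

theorem isFlatWell_of_deriv {B : ℝ} (hh : ∀ m : ℕ, ContDiff ℝ m h) (heven : h.Even)
    (hk : 1 ≤ k) (hder : ∀ i ≤ 2 * k - 1, iteratedDeriv i h 0 = 0)
    (hpos : 0 < iteratedDeriv (2 * k) h 0) (hroot : ∀ s, deriv h s = 0 → s = 0)
    (hderiv : ∀ θ, |deriv h θ - θ| ≤ L) (hderiv2 : ∀ θ, |deriv (deriv h) θ| ≤ B) :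
    IsFlatWell h k (iteratedDeriv (2 * k) h 0 / (2 * k).factorial) := by
  have ha : 0 < iteratedDeriv (2 * k) h 0 / (2 * k).factorial := by positivity
  have hL : 0 ≤ L := (abs_nonneg _).trans (hderiv 0)
  have hB : 0 ≤ B := (abs_nonneg _).trans (hderiv2 0)
  have hdiff : Differentiable ℝ h := (hh 1).differentiable (by simp)
  have hh' (m : ℕ) : ContDiff ℝ m (deriv h) :=
    ((contDiff_succ_iff_deriv (n := m)).1 (by exact_mod_cast hh (m + 1))).2.2
  have hh'' (m : ℕ) : ContDiff ℝ m (deriv (deriv h)) :=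
    ((contDiff_succ_iff_deriv (n := m)).1 (by exact_mod_cast hh' (m + 1))).2.2
  have hquad := abs_sub_sq_div_two_le hdiff (by simpa using hder 0 (by lia)) hderiv
  obtain ⟨C, hC, htaylor⟩ := exists_abs_sub_monomial_le (hh _) heven hk hder (B := 1 + L)
    (by positivity) fun θ hθ => by
      have h1 := abs_sub_abs_le_abs_sub (h θ) (θ ^ 2 / 2)
      rw [abs_of_nonneg (by positivity : 0 ≤ θ ^ 2 / 2), ← sq_abs θ] at h1
      have h2 : L * |θ| ≤ L * |θ| ^ 2 := by gcongr; exact le_self_pow₀ hθ two_ne_zero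
      have h3 := hquad θ
      rw [← sq_abs θ] at h3
      linarith [sq_nonneg |θ|]
  obtain ⟨c, hc, hlow⟩ := exists_mul_min_pow_le (R := 2 * L + 2) ha hC htaylor
    (monotoneOn_Ici_of_deriv_ne_zero (hh 1) hderiv hroot) fun θ hθ => by
      have h1 := (abs_le.1 (hquad θ)).1
      rw [abs_of_nonneg (by linarith)] at h1
      nlinarith
  refine ⟨ha, hh 2, heven, ?_, ?_, ⟨C, hC, htaylor⟩, c, hc, fun θ => ?_⟩
  · refine exists_abs_le_mul_abs_pow (A := 1 + L) (hh' _) (fun i hi => ?_) fun θ hθ => ?_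
    · rw [← iteratedDeriv_succ']; exact hder _ (by lia)
    · have h1 : |θ| ≤ |θ| ^ (2 * k - 1) := le_self_pow₀ hθ (by lia)
      nlinarith [abs_sub_abs_le_abs_sub (deriv h θ) θ, hderiv θ]
  · refine exists_abs_le_mul_abs_pow (A := B) (hh'' _) (fun i hi => ?_) fun θ hθ => ?_
    · rw [← iteratedDeriv_succ', ← iteratedDeriv_succ']; exact hder _ (by lia)
    · exact (hderiv2 θ).trans (le_mul_of_one_le_right hB (one_le_pow₀ hθ))
  · rcases abs_choice θ with hθ | hθ
    · rw [hθ]; exact hlow θ (hθ ▸ abs_nonneg θ)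
    · rw [hθ, ← heven θ]; exact hlow (-θ) (hθ ▸ abs_nonneg θ)

end Well

section BoundedVariables

variable {Ω : Type*} [MeasurableSpace Ω] {μ : Measure Ω} {X : Ω → ℝ} {L : ℝ}

theorem abs_integral_le_of_mem_Icc [IsProbabilityMeasure μ] (hX : ∀ᵐ ω ∂μ, X ω ∈ Icc (-L) L) :
    |∫ ω, X ω ∂μ| ≤ L := by
  simpa using norm_integral_le_of_norm_le_const (f := X) (hX.mono fun _ h => abs_le.2 h)

theorem integrableExpSet_eq_univ_of_mem_Icc [IsFiniteMeasure μ] (hXm : AEMeasurable X μ)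
    (hX : ∀ᵐ ω ∂μ, X ω ∈ Icc (-L) L) :
    integrableExpSet X μ = univ :=
  eq_univ_of_forall fun _ => integrable_exp_mul_of_mem_Icc hXm hX

theorem contDiff_cgf (h : integrableExpSet X μ = univ) (m : ℕ) : ContDiff ℝ m (cgf X μ) :=
  contDiff_iff_contDiffAt.2 fun _ => (analyticAt_cgf (by simp [h])).contDiffAt

end BoundedVariables

section Potential

variable {ρ : Measure ℝ} {L : ℝ}

theorem hfun_eq_sub_cgf : hfun ρ = fun s => s ^ 2 / 2 - cgf id ρ s := rfl

theorem even_hfun (hsym : ρ.map (fun x => -x) = ρ) : (hfun ρ).Even := fun s => by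
  have h : ∫ x, exp (-s * x) ∂ρ = ∫ x, exp (s * x) ∂ρ := by
    conv_rhs => rw [← hsym, integral_map (by fun_prop) (by fun_prop)]
    simp
  rw [hfun, hfun, h, neg_sq]

variable [IsProbabilityMeasure ρ] (hL : ∀ᵐ x ∂ρ, x ∈ Icc (-L) L)
include hL

theorem mem_interior_integrableExpSet_id (θ : ℝ) : θ ∈ interior (integrableExpSet id ρ) := by
  simp [integrableExpSet_eq_univ_of_mem_Icc aemeasurable_id hL]

theorem isProbabilityMeasure_tilted_id (θ : ℝ) : IsProbabilityMeasure (ρ.tilted (θ * id ·)) :=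
  isProbabilityMeasure_tilted (integrable_exp_mul_of_mem_Icc aemeasurable_id hL)

omit [IsProbabilityMeasure ρ] in
theorem tilted_mem_Icc (θ : ℝ) : ∀ᵐ x ∂ρ.tilted (θ * id ·), x ∈ Icc (-L) L :=
  (tilted_absolutelyContinuous _ _).ae_le hL

theorem contDiff_hfun (m : ℕ) : ContDiff ℝ m (hfun ρ) := by
  rw [hfun_eq_sub_cgf]
  exact ((contDiff_id.pow 2).div_const 2).sub
    (contDiff_cgf (integrableExpSet_eq_univ_of_mem_Icc aemeasurable_id hL) m)

theorem deriv_hfun : deriv (hfun ρ) = fun θ => θ - deriv (cgf id ρ) θ := by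
  have hcgf : Differentiable ℝ (cgf id ρ) :=
    (contDiff_cgf (integrableExpSet_eq_univ_of_mem_Icc aemeasurable_id hL) 1).differentiable
      (by simp)
  ext θ
  rw [hfun_eq_sub_cgf]
  exact ((((hasDerivAt_id' θ).fun_pow 2).div_const 2).fun_sub (hcgf θ).hasDerivAt).deriv.trans
    (by simp)

theorem deriv_hfun_eq_sub_integral_tilted (θ : ℝ) :
    deriv (hfun ρ) θ = θ - ∫ x, x ∂ρ.tilted (θ * id ·) := by
  simp only [deriv_hfun hL]
  rw [← integral_tilted_mul_self (mem_interior_integrableExpSet_id hL θ)]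
  simp

theorem deriv_deriv_hfun_eq_sub_variance_tilted (θ : ℝ) :
    deriv (deriv (hfun ρ)) θ = 1 - Var[id; ρ.tilted (θ * id ·)] := by
  have hcgf : Differentiable ℝ (deriv (cgf id ρ)) :=
    ((contDiff_succ_iff_deriv (n := 1)).1 (contDiff_cgf
      (integrableExpSet_eq_univ_of_mem_Icc aemeasurable_id hL) 2)).2.2.differentiable (by simp)
  rw [deriv_hfun hL, variance_tilted_mul (mem_interior_integrableExpSet_id hL θ),
    iteratedDeriv_succ, iteratedDeriv_one]
  exact ((hasDerivAt_id' θ).fun_sub (hcgf θ).hasDerivAt).deriv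

theorem isFlatWell_hfun {k : ℕ} (hsym : ρ.map (fun x => -x) = ρ)
    (hroot : ∀ s, deriv (hfun ρ) s = 0 → s = 0) (hk : 1 ≤ k)
    (hder : ∀ i ≤ 2 * k - 1, iteratedDeriv i (hfun ρ) 0 = 0)
    (hpos : 0 < iteratedDeriv (2 * k) (hfun ρ) 0) :
    IsFlatWell (hfun ρ) k (iteratedDeriv (2 * k) (hfun ρ) 0 / (2 * k).factorial) := by
  refine isFlatWell_of_deriv (L := L) (B := 1 + L ^ 2) (contDiff_hfun hL) (even_hfun hsym) hk hder
    hpos hroot (fun θ => ?_) fun θ => ?_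
  all_goals have := isProbabilityMeasure_tilted_id hL θ
  · rw [deriv_hfun_eq_sub_integral_tilted hL, sub_sub_cancel_left, abs_neg]
    exact abs_integral_le_of_mem_Icc (tilted_mem_Icc hL θ)
  · rw [deriv_deriv_hfun_eq_sub_variance_tilted hL]
    have hvar := variance_le_sq_of_bounded (X := id) (tilted_mem_Icc hL θ) aemeasurable_id
    rw [abs_le]
    constructor <;> linarith [variance_nonneg id (ρ.tilted (θ * id ·)), sq_nonneg L]

end Potential

theorem integral_sub_integral_mul_eq_zero_of_indepFun {Ω : Type*} [MeasurableSpace Ω]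
    {μ : Measure Ω} [IsProbabilityMeasure μ] {X T : Ω → ℝ} {g : ℝ → ℝ} (hX : Integrable X μ)
    (hT : AEMeasurable T μ) (hg : Measurable g) (hXT : X ⟂ᵢ[μ] T) :
    ∫ ω, (X ω - μ[X]) * g (T ω) ∂μ = 0 := by
  have h := hXT.integral_fun_comp_mul_comp (f := fun x => x - μ[X]) hX.aemeasurable hT
    (by fun_prop) hg.aestronglyMeasurable
  rw [h, integral_sub hX (integrable_const _)]
  simp

/-- The bounded function `F` has increments `F b - F a ≤ (b - a) * (A b - B a)` controlled by two
bounded monotone functions. This is a derivative-free form of `F' ≤ A - B`, fit for discontinuous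
`A` and `B`. -/
structure HasSteinBound (F A B : ℝ → ℝ) : Prop where
  measurable : Measurable F
  monotone_upper : Monotone A
  monotone_lower : Monotone B
  bounded : ∃ K, ∀ s, |F s| ≤ K ∧ |A s| ≤ K ∧ |B s| ≤ K
  sub_le : ∀ ⦃a b⦄, a ≤ b → F b - F a ≤ (b - a) * (A b - B a)

namespace HasSteinBound

variable {Ω : Type*} [MeasurableSpace Ω] {μ : Measure Ω} {F A B : ℝ → ℝ} {X Y T : Ω → ℝ} {L : ℝ}
  (h : HasSteinBound F A B)
include h

theorem comp_sub_const (c : ℝ) :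
    HasSteinBound (fun s => F (s - c)) (fun s => A (s - c)) (fun s => B (s - c)) where
  measurable := h.measurable.comp (measurable_sub_const c)
  monotone_upper _ _ hab := h.monotone_upper (sub_le_sub_right hab c)
  monotone_lower _ _ hab := h.monotone_lower (sub_le_sub_right hab c)
  bounded := let ⟨K, hK⟩ := h.bounded; ⟨K, fun s => hK (s - c)⟩
  sub_le a b hab := by simpa using h.sub_le (sub_le_sub_right hab c)

theorem integrable_mul_comp (hY : Integrable Y μ) (hT : Measurable T) :
    Integrable (fun ω => Y ω * F (T ω)) μ := by
  obtain ⟨K, hK⟩ := h.bounded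
  exact hY.mul_bdd (h.measurable.comp hT).aestronglyMeasurable (ae_of_all _ fun ω => (hK _).1)

theorem measurable_sub_comp (hX : Measurable X) (hT : Measurable T) :
    Measurable fun ω => A (X ω) - B (T ω) :=
  (h.monotone_upper.measurable.comp hX).sub (h.monotone_lower.measurable.comp hT)

theorem integrable_mul_sub_comp (hY : Integrable Y μ) (hX : Measurable X) (hT : Measurable T) :
    Integrable (fun ω => Y ω * (A (X ω) - B (T ω))) μ := by
  obtain ⟨K, hK⟩ := h.bounded
  exact hY.mul_bdd (h.measurable_sub_comp hX hT).aestronglyMeasurable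
    (ae_of_all _ fun ω => (abs_sub _ _).trans (add_le_add (hK _).2.1 (hK _).2.2))

theorem integrable_upper_comp [IsFiniteMeasure μ] (hX : Measurable X) :
    Integrable (fun ω => A (X ω)) μ := by
  obtain ⟨K, hK⟩ := h.bounded
  exact .of_bound (h.monotone_upper.measurable.comp hX).aestronglyMeasurable K
    (ae_of_all _ fun ω => (hK _).2.1)

theorem integrable_lower_comp [IsFiniteMeasure μ] (hT : Measurable T) :
    Integrable (fun ω => B (T ω)) μ := by
  obtain ⟨K, hK⟩ := h.bounded
  exact .of_bound (h.monotone_lower.measurable.comp hT).aestronglyMeasurable K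
    (ae_of_all _ fun ω => (hK _).2.2)

theorem integrable_sub_comp [IsFiniteMeasure μ] (hX : Measurable X) (hT : Measurable T) :
    Integrable (fun ω => A (X ω) - B (T ω)) μ :=
  (h.integrable_upper_comp hX).sub (h.integrable_lower_comp hT)

theorem mul_sub_le_sq_mul {x m : ℝ} (hx : x ∈ Icc (-L) L) (hm : m ∈ Icc (-L) L) (t : ℝ) :
    (x - m) * (F (t + x) - F (t + m)) ≤ (x - m) ^ 2 * (A (t + L) - B (t - L)) := by
  have hincr {p q : ℝ} (hp : p ∈ Icc (-L) L) (hq : q ∈ Icc (-L) L) (hpq : p ≤ q) :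
      F (t + q) - F (t + p) ≤ (q - p) * (A (t + L) - B (t - L)) := by
    refine (h.sub_le (by linarith)).trans ?_
    rw [add_sub_add_left_eq_sub]
    have hA := h.monotone_upper (by linarith [hq.2] : t + q ≤ t + L)
    have hB := h.monotone_lower (by linarith [hp.1] : t - L ≤ t + p)
    exact mul_le_mul_of_nonneg_left (by linarith) (by linarith)
  rcases le_total x m with hle | hle
  · nlinarith [hincr hx hm hle]
  · nlinarith [hincr hm hx hle]

theorem integral_sub_comp_add_le [IsFiniteMeasure μ] (hX : Measurable X) (hT : Measurable T)
    (hXL : ∀ᵐ ω ∂μ, X ω ∈ Icc (-L) L) :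
    ∫ ω, (A (T ω + L) - B (T ω - L)) ∂μ
      ≤ ∫ ω, (A (T ω + X ω + 2 * L) - B (T ω + X ω - 2 * L)) ∂μ := by
  refine integral_mono_ae (h.integrable_sub_comp (by fun_prop) (by fun_prop))
    (h.integrable_sub_comp (by fun_prop) (by fun_prop)) ?_
  filter_upwards [hXL] with ω hω
  exact sub_le_sub (h.monotone_upper (by linarith [hω.1])) (h.monotone_lower (by linarith [hω.2]))

theorem integral_sub_mul_le_of_indepFun [IsProbabilityMeasure μ] (hX : Measurable X)
    (hT : Measurable T) (hXT : X ⟂ᵢ[μ] T) (hXL : ∀ᵐ ω ∂μ, X ω ∈ Icc (-L) L) :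
    ∫ ω, (X ω - μ[X]) * F (T ω + X ω) ∂μ
      ≤ Var[X; μ] * ∫ ω, (A (T ω + X ω + 2 * L) - B (T ω + X ω - 2 * L)) ∂μ := by
  have hm : μ[X] ∈ Icc (-L) L := abs_le.1 (abs_integral_le_of_mem_Icc hXL)
  set m := μ[X]
  have hXint : Integrable X μ :=
    .of_bound hX.aestronglyMeasurable L (hXL.mono fun _ hω => abs_le.2 hω)
  have hX2 : MemLp X 2 μ :=
    .of_bound hX.aestronglyMeasurable L (hXL.mono fun _ hω => abs_le.2 hω)
  have hsub : Integrable (fun ω => X ω - m) μ := hXint.sub (integrable_const m)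
  have hsq : Integrable (fun ω => (X ω - m) ^ 2) μ := (hX2.sub (memLp_const m)).integrable_sq
  have hcentre : ∫ ω, (X ω - m) * F (T ω + m) ∂μ = 0 :=
    integral_sub_integral_mul_eq_zero_of_indepFun (g := fun t => F (t + m)) hXint hT.aemeasurable
      (h.measurable.comp (by fun_prop)) hXT
  calc ∫ ω, (X ω - m) * F (T ω + X ω) ∂μ
      = ∫ ω, (X ω - m) * (F (T ω + X ω) - F (T ω + m)) ∂μ := by
        simp only [mul_sub]
        rw [integral_sub (h.integrable_mul_comp hsub (by fun_prop))
          (h.integrable_mul_comp hsub (by fun_prop)), hcentre, sub_zero]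
    _ ≤ ∫ ω, (X ω - m) ^ 2 * (A (T ω + L) - B (T ω - L)) ∂μ := by
        refine integral_mono_ae ?_
          (h.integrable_mul_sub_comp hsq (by fun_prop) (by fun_prop)) ?_
        · simp only [mul_sub]
          exact (h.integrable_mul_comp hsub (by fun_prop)).sub
            (h.integrable_mul_comp hsub (by fun_prop))
        · filter_upwards [hXL] with ω hω using h.mul_sub_le_sq_mul hω hm (T ω)
    _ = Var[X; μ] * ∫ ω, (A (T ω + L) - B (T ω - L)) ∂μ := by
        rw [variance_eq_integral hX.aemeasurable]
        exact hXT.integral_fun_comp_mul_comp (f := fun x => (x - m) ^ 2)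
          (g := fun t => A (t + L) - B (t - L)) hX.aemeasurable hT.aemeasurable (by fun_prop)
          (h.measurable_sub_comp (by fun_prop) (by fun_prop)).aestronglyMeasurable
    _ ≤ Var[X; μ] * ∫ ω, (A (T ω + X ω + 2 * L) - B (T ω + X ω - 2 * L)) ∂μ := by
        exact mul_le_mul_of_nonneg_left (h.integral_sub_comp_add_le hX hT hXL)
          (variance_nonneg _ _)

theorem integral_sub_mul_le_of_iIndepFun {ι : Type*} [Fintype ι] [IsProbabilityMeasure μ]
    {X : ι → Ω → ℝ} (hX : ∀ i, Measurable (X i)) (hind : iIndepFun X μ)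
    (hXL : ∀ i, ∀ᵐ ω ∂μ, X i ω ∈ Icc (-L) L) {S : Ω → ℝ}
    (hS : ∀ ω, S ω = ∑ i, X i ω) :
    ∫ ω, (S ω - μ[S]) * F (S ω) ∂μ
      ≤ Var[S; μ] * ∫ ω, (A (S ω + 2 * L) - B (S ω - 2 * L)) ∂μ := by
  classical
  have hX2 (i : ι) : MemLp (X i) 2 μ :=
    .of_bound (hX i).aestronglyMeasurable L ((hXL i).mono fun _ hω => abs_le.2 hω)
  have hXint (i : ι) : Integrable (X i) μ := (hX2 i).integrable (by simp)
  have hSm : Measurable S := funext hS ▸ Finset.measurable_sum _ fun i _ => hX i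
  have hsplit (i : ι) (ω : Ω) : S ω = ∑ j ∈ Finset.univ.erase i, X j ω + X i ω := by
    rw [hS, Finset.sum_erase_add _ _ (Finset.mem_univ i)]
  have hmean : μ[S] = ∑ i, μ[X i] := by
    simp only [hS]; exact integral_finsetSum _ fun i _ => hXint i
  have hterm (i : ι) : Integrable (fun ω => (X i ω - μ[X i]) * F (S ω)) μ :=
    h.integrable_mul_comp ((hXint i).sub (integrable_const _)) hSm
  have hvar : Var[S; μ] = ∑ i, Var[X i; μ] := by
    rw [← IndepFun.variance_sum (fun i _ => hX2 i) fun i _ j _ hij => hind.indepFun hij]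
    congr 1; ext ω; simp [hS]
  calc ∫ ω, (S ω - μ[S]) * F (S ω) ∂μ
      = ∑ i, ∫ ω, (X i ω - μ[X i]) * F (S ω) ∂μ := by
        rw [← integral_finsetSum _ fun i _ => hterm i, hmean]
        simp only [hS, ← Finset.sum_mul, Finset.sum_sub_distrib]
    _ ≤ ∑ i, Var[X i; μ] * ∫ ω, (A (S ω + 2 * L) - B (S ω - 2 * L)) ∂μ := by
        refine Finset.sum_le_sum fun i _ => ?_
        have hindep := hind.indepFun_finsetSum_of_notMem hX (Finset.notMem_erase i Finset.univ)
        rw [Finset.sum_fn] at hindep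
        simp only [hsplit i]
        exact h.integral_sub_mul_le_of_indepFun (hX i) (Finset.measurable_sum _ fun j _ => hX j)
          hindep.symm (hXL i)
    _ = Var[S; μ] * ∫ ω, (A (S ω + 2 * L) - B (S ω - 2 * L)) ∂μ := by
        rw [hvar, Finset.sum_mul]

end HasSteinBound

section TiltedProduct

theorem pi_tilted {ι : Type*} [Fintype ι] {α : ι → Type*} [∀ i, MeasurableSpace (α i)]
    {ρ : ∀ i, Measure (α i)} [∀ i, IsProbabilityMeasure (ρ i)] {f : ∀ i, α i → ℝ}
    (hf : ∀ i, Integrable (fun x => exp (f i x)) (ρ i)) :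
    Measure.pi (fun i => (ρ i).tilted (f i)) = (Measure.pi ρ).tilted fun x => ∑ i, f i (x i) := by
  have _ (i : ι) : IsProbabilityMeasure ((ρ i).tilted (f i)) := isProbabilityMeasure_tilted (hf i)
  refine Measure.pi_eq fun s hs => ?_
  have hindicator (x : ∀ i, α i) :
      (univ.pi s).indicator (fun x => exp (∑ i, f i (x i)) / ∏ i, ∫ y, exp (f i y) ∂ρ i) x
        = ∏ i, (s i).indicator (fun x => exp (f i x) / ∫ y, exp (f i y) ∂ρ i) (x i) := by
    by_cases hx : x ∈ univ.pi s
    · rw [indicator_of_mem hx, exp_sum, ← Finset.prod_div_distrib]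
      exact Finset.prod_congr rfl fun i _ => by rw [indicator_of_mem (hx i trivial)]
    · obtain ⟨i, -, hi⟩ : ∃ i ∈ univ, x i ∉ s i := by simpa [mem_pi] using hx
      rw [indicator_of_notMem hx, Finset.prod_eq_zero (Finset.mem_univ i)]
      exact indicator_of_notMem hi _
  simp_rw [fun i => tilted_apply_eq_ofReal_integral' (f i) (hs i),
    tilted_apply_eq_ofReal_integral' _ (MeasurableSet.univ_pi hs)]
  rw [← ENNReal.ofReal_prod_of_nonneg fun i _ => integral_nonneg fun x => by positivity]
  simp_rw [fun i => (integral_indicator (hs i) (μ := ρ i)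
      (f := fun x => exp (f i x) / ∫ y, exp (f i y) ∂ρ i)).symm]
  rw [← integral_indicator (MeasurableSet.univ_pi hs), ← integral_fintype_prod_eq_prod,
    show ∫ x, exp (∑ i, f i (x i)) ∂Measure.pi ρ = ∏ i, ∫ y, exp (f i y) ∂ρ i by
      simp only [exp_sum]; exact integral_fintype_prod_eq_prod fun i x => exp (f i x)]
  simp only [hindicator]

end TiltedProduct

section TiltedSpins

variable {ρ : Measure ℝ} [IsProbabilityMeasure ρ] {L : ℝ} {n : ℕ}

theorem pi_mem_Icc (hL : ∀ᵐ x ∂ρ, x ∈ Icc (-L) L) :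
    ∀ᵐ x ∂Measure.pi fun _ : Fin n => ρ, ∀ i, x i ∈ Icc (-L) L :=
  ae_all_iff.2 fun i => (Measure.tendsto_eval_ae_ae (μ := fun _ => ρ) (i := i)).eventually hL

theorem sum_mem_Icc_of_forall {x : Fin n → ℝ} (hx : ∀ i, x i ∈ Icc (-L) L) :
    ∑ i, x i ∈ Icc (-(n * L)) (n * L) := by
  constructor
  · simpa using Finset.card_nsmul_le_sum Finset.univ x (-L) fun i _ => (hx i).1
  · simpa using Finset.sum_le_card_nsmul Finset.univ x L fun i _ => (hx i).2

theorem cgf_sum_pi (n : ℕ) :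
    cgf (fun x : Fin n → ℝ => ∑ i, x i) (Measure.pi fun _ => ρ) = fun θ => n * cgf id ρ θ := by
  funext θ
  have hmgf : mgf (fun x : Fin n → ℝ => ∑ i, x i) (Measure.pi fun _ => ρ) θ = mgf id ρ θ ^ n := by
    have h := integral_fintype_prod_eq_pow (ι := Fin n) (μ := ρ) fun x => exp (θ * x)
    rw [Fintype.card_fin] at h
    simp only [mgf, id, ← h, Finset.mul_sum, exp_sum]
  rw [cgf, hmgf, log_pow, cgf]

variable (hL : ∀ᵐ x ∂ρ, x ∈ Icc (-L) L)
include hL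

theorem integrableExpSet_sum_pi :
    integrableExpSet (fun x : Fin n → ℝ => ∑ i, x i) (Measure.pi fun _ => ρ) = univ :=
  integrableExpSet_eq_univ_of_mem_Icc (by fun_prop)
    ((pi_mem_Icc hL).mono fun _ hx => sum_mem_Icc_of_forall hx)

theorem integral_exp_mul_sum_mul (θ : ℝ) (g : (Fin n → ℝ) → ℝ) :
    ∫ x, exp (θ * ∑ i, x i - n * θ ^ 2 / 2) * g x ∂(Measure.pi fun _ => ρ)
      = exp (-n * hfun ρ θ)
        * ∫ x, g x ∂(Measure.pi fun _ : Fin n => ρ).tilted (θ * ∑ i, · i) := by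
  have hθ : Integrable (fun x : Fin n → ℝ => exp (θ * ∑ i, x i)) (Measure.pi fun _ => ρ) :=
    (integrableExpSet_sum_pi hL).ge (mem_univ θ)
  rw [integral_tilted_mul_eq_cgf g hθ, ← integral_const_mul, cgf_sum_pi]
  congr with x
  rw [smul_eq_mul, ← mul_assoc, ← exp_add, hfun_eq_sub_cgf]
  congr 2; ring

theorem integral_sum_tilted (θ : ℝ) :
    ∫ x, ∑ i, x i ∂(Measure.pi fun _ : Fin n => ρ).tilted (θ * ∑ i, · i)
      = n * (θ - deriv (hfun ρ) θ) := by
  rw [integral_tilted_mul_self (by simp [integrableExpSet_sum_pi hL])]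
  simp only [cgf_sum_pi, deriv_hfun hL, sub_sub_cancel, deriv_const_mul_field]

theorem variance_sum_tilted (θ : ℝ) :
    Var[fun x => ∑ i, x i; (Measure.pi fun _ : Fin n => ρ).tilted (θ * ∑ i, · i)]
      = n * (1 - deriv (deriv (hfun ρ)) θ) := by
  rw [variance_tilted_mul (by simp [integrableExpSet_sum_pi hL]), cgf_sum_pi,
    deriv_deriv_hfun_eq_sub_variance_tilted hL, sub_sub_cancel,
    variance_tilted_mul (mem_interior_integrableExpSet_id hL θ), iteratedDeriv_const_mul_field]

theorem HasSteinBound.integral_exp_mul_le {F A B : ℝ → ℝ} (h : HasSteinBound F A B) (θ : ℝ) :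
    ∫ x : Fin n → ℝ, exp (θ * ∑ i, x i - n * θ ^ 2 / 2)
        * ((∑ i, x i - n * (θ - deriv (hfun ρ) θ)) * F (∑ i, x i)) ∂(Measure.pi fun _ => ρ)
      ≤ ∫ x : Fin n → ℝ, exp (θ * ∑ i, x i - n * θ ^ 2 / 2)
        * (n * (1 - deriv (deriv (hfun ρ)) θ)
          * (A (∑ i, x i + 2 * L) - B (∑ i, x i - 2 * L))) ∂(Measure.pi fun _ => ρ) := by
  have := isProbabilityMeasure_tilted_id hL θ
  rw [integral_exp_mul_sum_mul hL, integral_exp_mul_sum_mul hL, integral_const_mul,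
    ← integral_sum_tilted hL, ← variance_sum_tilted hL]
  have hpi : (Measure.pi fun _ : Fin n => ρ).tilted (θ * ∑ i, · i)
      = Measure.pi fun _ => ρ.tilted (θ * id ·) := by
    rw [pi_tilted fun _ => integrable_exp_mul_of_mem_Icc aemeasurable_id hL]
    simp only [id, Finset.mul_sum]
  rw [hpi]
  gcongr
  exact h.integral_sub_mul_le_of_iIndepFun (X := fun i x => x i) measurable_pi_apply
    (iIndepFun_pi (X := fun _ => id) fun _ => aemeasurable_id)
    (ae_all_iff.1 (pi_mem_Icc (tilted_mem_Icc hL θ))) fun _ => rfl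

end TiltedSpins

section SmoothedStep

/-- The right-continuous Heaviside function. -/
noncomputable def unitStep : ℝ → ℝ := (Ici 0).indicator 1

theorem unitStep_of_nonneg {s : ℝ} (hs : 0 ≤ s) : unitStep s = 1 := indicator_of_mem hs _

theorem unitStep_of_neg {s : ℝ} (hs : s < 0) : unitStep s = 0 := indicator_of_notMem hs.not_ge _

theorem unitStep_mem_Icc (s : ℝ) : unitStep s ∈ Icc 0 1 := by
  rcases le_or_gt 0 s with hs | hs
  · simp [unitStep_of_nonneg hs]
  · simp [unitStep_of_neg hs]

theorem monotone_unitStep : Monotone unitStep := by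
  intro a b hab
  rcases le_or_gt 0 a with ha | ha
  · rw [unitStep_of_nonneg ha, unitStep_of_nonneg (ha.trans hab)]
  · rw [unitStep_of_neg ha]; exact (unitStep_mem_Icc b).1

theorem max_zero_sub_max_zero_mem_Icc {a b : ℝ} (hab : a ≤ b) :
    max b 0 - max a 0 ∈ Icc ((b - a) * unitStep a) ((b - a) * unitStep b) := by
  rcases le_or_gt 0 a with ha | ha
  · simp [unitStep_of_nonneg ha, unitStep_of_nonneg (ha.trans hab), ha, ha.trans hab]
  rcases le_or_gt 0 b with hb | hb
  · simp [unitStep_of_neg ha, unitStep_of_nonneg hb, ha.le, hb]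
  · simp [unitStep_of_neg ha, unitStep_of_neg hb, ha.le, hb.le]

/-- The average `E f(s + Z)` of `f` over a random translation `Z` of law `γ`. -/
noncomputable def noiseAverage (γ : Measure ℝ) (f : ℝ → ℝ) (s : ℝ) : ℝ := ∫ t, f (s + t) ∂γ

/-- The difference between the positive part and its average over the noise `γ`. Its derivative is
`unitStep - noiseAverage γ unitStep`, so it is the test function of Stein's method which compares
the laws of a random variable and of its perturbation by the noise. -/
noncomputable def rampDefect (γ : Measure ℝ) (s : ℝ) : ℝ := max s 0 - noiseAverage γ (max · 0) s

variable {γ : Measure ℝ} [IsProbabilityMeasure γ]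

theorem integrable_unitStep_add (s : ℝ) : Integrable (fun t => unitStep (s + t)) γ :=
  .of_mem_Icc 0 1 (monotone_unitStep.measurable.comp (measurable_const_add s)).aemeasurable
    (ae_of_all _ fun _ => unitStep_mem_Icc _)

theorem monotone_noiseAverage_unitStep : Monotone (noiseAverage γ unitStep) := fun _ _ hab =>
  integral_mono (integrable_unitStep_add _) (integrable_unitStep_add _) fun _ =>
    monotone_unitStep (by gcongr)

omit [IsProbabilityMeasure γ] in
theorem noiseAverage_unitStep (s : ℝ) : noiseAverage γ unitStep s = γ.real (Ici (-s)) := by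
  rw [← integral_indicator_one measurableSet_Ici]
  refine integral_congr_ae (ae_of_all _ fun t => ?_)
  simp only [unitStep, indicator_apply, mem_Ici, neg_le_iff_add_nonneg', Pi.one_apply]

theorem noiseAverage_unitStep_mem_Icc (s : ℝ) : noiseAverage γ unitStep s ∈ Icc 0 1 := by
  rw [noiseAverage_unitStep]
  exact ⟨measureReal_nonneg, measureReal_le_one⟩

theorem integrable_max_add_zero (hγ : Integrable id γ) (s : ℝ) :
    Integrable (fun t => max (s + t) 0) γ :=
  ((integrable_const s).add hγ).sup (integrable_const 0)

theorem noiseAverage_max_sub_mem_Icc (hγ : Integrable id γ) {a b : ℝ} (hab : a ≤ b) :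
    noiseAverage γ (max · 0) b - noiseAverage γ (max · 0) a
      ∈ Icc ((b - a) * noiseAverage γ unitStep a) ((b - a) * noiseAverage γ unitStep b) := by
  have hpt (t : ℝ) := add_sub_add_right_eq_sub b a t ▸
    max_zero_sub_max_zero_mem_Icc (add_le_add_left hab t)
  have hint := (integrable_max_add_zero hγ b).sub (integrable_max_add_zero hγ a)
  simp only [noiseAverage, ← integral_const_mul]
  rw [← integral_sub (integrable_max_add_zero hγ b) (integrable_max_add_zero hγ a)]
  exact ⟨integral_mono ((integrable_unitStep_add a).const_mul _) hint fun t => (hpt t).1,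
    integral_mono hint ((integrable_unitStep_add b).const_mul _) fun t => (hpt t).2⟩

theorem abs_rampDefect_le_integral_abs (hγ : Integrable id γ) (s : ℝ) :
    |rampDefect γ s| ≤ ∫ t, |t| ∂γ := by
  have hconst : max s 0 = ∫ _, max s 0 ∂γ := by simp
  rw [rampDefect, noiseAverage, hconst,
    ← integral_sub (integrable_const _) (integrable_max_add_zero hγ s)]
  refine (abs_integral_le_integral_abs).trans
    (integral_mono_of_nonneg (ae_of_all _ fun _ => abs_nonneg _) hγ.abs (ae_of_all _ fun t => ?_))
  simpa using abs_max_sub_max_le_abs s (s + t) 0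

theorem measurable_rampDefect : Measurable (rampDefect γ) := by
  refine (by fun_prop : Measurable fun s : ℝ => max s 0).sub ?_
  exact (StronglyMeasurable.integral_prod_right (f := fun s t : ℝ => max (s + t) 0)
    (by fun_prop : Measurable fun p : ℝ × ℝ => max (p.1 + p.2) 0).stronglyMeasurable).measurable

theorem abs_le_of_mem_Icc_zero_one {x : ℝ} (hx : x ∈ Icc 0 1) : |x| ≤ 1 :=
  abs_le.2 ⟨by linarith [hx.1], hx.2⟩

theorem hasSteinBound_rampDefect (hγ : Integrable id γ) :
    HasSteinBound (rampDefect γ) unitStep (noiseAverage γ unitStep) where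
  measurable := measurable_rampDefect
  monotone_upper := monotone_unitStep
  monotone_lower := monotone_noiseAverage_unitStep
  bounded := ⟨max (∫ t, |t| ∂γ) 1, fun s => ⟨
    le_max_of_le_left (abs_rampDefect_le_integral_abs hγ s),
    le_max_of_le_right (abs_le_of_mem_Icc_zero_one (unitStep_mem_Icc s)),
    le_max_of_le_right (abs_le_of_mem_Icc_zero_one (noiseAverage_unitStep_mem_Icc s))⟩⟩
  sub_le a b hab := by
    have hramp := (max_zero_sub_max_zero_mem_Icc hab).2
    have hnoise := (noiseAverage_max_sub_mem_Icc hγ hab).1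
    rw [rampDefect, rampDefect, mul_sub]
    linarith

theorem hasSteinBound_neg_rampDefect (hγ : Integrable id γ) :
    HasSteinBound (fun s => -rampDefect γ s) (noiseAverage γ unitStep) unitStep where
  measurable := measurable_rampDefect.neg
  monotone_upper := monotone_noiseAverage_unitStep
  monotone_lower := monotone_unitStep
  bounded := by
    obtain ⟨K, hK⟩ := (hasSteinBound_rampDefect hγ).bounded
    exact ⟨K, fun s => ⟨(abs_neg _).trans_le (hK s).1, (hK s).2.2, (hK s).2.1⟩⟩
  sub_le a b hab := by
    have hramp := (max_zero_sub_max_zero_mem_Icc hab).1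
    have hnoise := (noiseAverage_max_sub_mem_Icc hγ hab).2
    rw [rampDefect, rampDefect, mul_sub]
    linarith

theorem abs_unitStep_sub_noiseAverage_le {N : ℝ≥0} (hγ : HasSubgaussianMGF id N γ) (s : ℝ) :
    |unitStep s - noiseAverage γ unitStep s| ≤ exp (-s ^ 2 / (2 * N)) := by
  rw [noiseAverage_unitStep]
  rcases le_or_gt 0 s with hs | hs
  · rw [unitStep_of_nonneg hs, ← probReal_compl_eq_one_sub measurableSet_Ici,
      abs_of_nonneg measureReal_nonneg]
    refine (measureReal_mono fun t ht => ?_).trans (hγ.neg.measure_ge_le hs)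
    simp only [compl_Ici, mem_Iio, mem_ofPred_eq, Pi.neg_apply, id] at ht ⊢
    linarith
  · rw [unitStep_of_neg hs, zero_sub, abs_neg, abs_of_nonneg measureReal_nonneg]
    rw [← neg_sq s]
    exact hγ.measure_ge_le (neg_nonneg.2 hs.le)

theorem integral_max_sub_zero_le {Ω : Type*} [MeasurableSpace Ω] {μ : Measure Ω} {X : Ω → ℝ}
    {N : ℝ≥0} (hN : N ≠ 0) (hX : HasSubgaussianMGF X N μ) {d : ℝ} (hd : 0 ≤ d) :
    ∫ ω, max (X ω - d) 0 ∂μ ≤ √N * exp (-d ^ 2 / (2 * N)) := by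
  set r := √(N : ℝ)
  have hr : 0 < r := sqrt_pos.2 (by positivity)
  have hsq : r ^ 2 = N := sq_sqrt N.coe_nonneg
  -- the optimal exponent in the Chernoff bound at level `d + r`
  set l := d / N + 1 / r with hl
  have hlpos : 0 < l := by positivity
  have hle (ω : Ω) : max (X ω - d) 0 ≤ exp (-(l * d) - 1) / l * exp (l * X ω) := by
    rw [div_mul_eq_mul_div, ← exp_add, le_div_iff₀ hlpos]
    refine (max_mul_of_nonneg _ _ hlpos.le).trans_le (max_le ?_ (by rw [zero_mul]; positivity))
    linarith [add_one_le_exp (-(l * d) - 1 + l * X ω)]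
  calc ∫ ω, max (X ω - d) 0 ∂μ
      ≤ ∫ ω, exp (-(l * d) - 1) / l * exp (l * X ω) ∂μ :=
        integral_mono_of_nonneg (ae_of_all _ fun _ => le_max_right _ _)
          ((hX.integrable_exp_mul l).const_mul _) (ae_of_all _ hle)
    _ ≤ exp (-(l * d) - 1) / l * exp (N * l ^ 2 / 2) := by
        rw [integral_const_mul]; exact mul_le_mul_of_nonneg_left (hX.mgf_le l) (by positivity)
    _ = l⁻¹ * exp (-d ^ 2 / (2 * N) - 1 / 2) := by
        rw [div_mul_eq_mul_div, ← exp_add, div_eq_inv_mul, hl]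
        congr 2
        rw [← hsq]; field_simp; ring
    _ ≤ r * exp (-d ^ 2 / (2 * N)) := by
        gcongr
        · refine inv_le_of_inv_le₀ hr ?_
          rw [hl, one_div]; exact le_add_of_nonneg_left (by positivity)
        · linarith

theorem abs_rampDefect_le {N : ℝ≥0} (hN : N ≠ 0) (hγ : HasSubgaussianMGF id N γ)
    (hmean : ∫ t, t ∂γ = 0) (s : ℝ) :
    |rampDefect γ s| ≤ √N * exp (-s ^ 2 / (2 * N)) := by
  rcases le_total 0 s with hs | hs
  · have hdefect : rampDefect γ s = -∫ t, max (-t - s) 0 ∂γ := by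
      have hid : Integrable (fun t => t) γ := hγ.integrable
      have hsplit (t : ℝ) : max (s + t) 0 = s + t + max (-t - s) 0 := by
        rcases le_total 0 (s + t) with h | h
        · rw [max_eq_left h, max_eq_right (by linarith), add_zero]
        · rw [max_eq_right h, max_eq_left (by linarith)]; ring
      have hint : Integrable (fun t => max (-t - s) 0) γ :=
        (hid.neg.sub (integrable_const s)).sup (integrable_const 0)
      calc rampDefect γ s
          = s - ∫ t, (s + t + max (-t - s) 0) ∂γ := by
            simp only [rampDefect, noiseAverage, hsplit, max_eq_left hs]
        _ = s - (∫ t, (s + t) ∂γ + ∫ t, max (-t - s) 0 ∂γ) := by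
            rw [integral_add (f := fun t => s + t) ((integrable_const s).add hid) hint]
        _ = -∫ t, max (-t - s) 0 ∂γ := by
            rw [integral_add (integrable_const s) hid, hmean]; simp
    rw [hdefect, abs_neg, abs_of_nonneg (integral_nonneg fun _ => le_max_right _ _)]
    exact integral_max_sub_zero_le hN hγ.neg hs
  · rw [rampDefect, max_eq_right hs, zero_sub, abs_neg, noiseAverage,
      abs_of_nonneg (integral_nonneg fun _ => le_max_right _ _)]
    simpa [add_comm, sub_neg_eq_add] using integral_max_sub_zero_le hN hγ (neg_nonneg.2 hs)

theorem hasSubgaussianMGF_id_gaussianReal (N : ℝ≥0) :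
    HasSubgaussianMGF id N (gaussianReal 0 N) where
  integrable_exp_mul := integrable_exp_mul_gaussianReal
  mgf_le t := by simp [mgf_id_gaussianReal]

end SmoothedStep

section HubbardStratonovich

/-- The Hubbard–Stratonovich transform of the law `σ` of a total spin: the joint law of the total
spin `s` and of an auxiliary field `θ`, with density proportional to `exp (θ * s - n * θ ^ 2 / 2)`
with respect to `σ ⊗ dθ`. -/
noncomputable def hsMeasure (σ : Measure ℝ) (n : ℕ) : Measure (ℝ × ℝ) :=
  (σ.prod volume).tilted fun p => p.2 * p.1 - n * p.2 ^ 2 / 2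

variable {σ : Measure ℝ} {n : ℕ} {M : ℝ}

theorem gaussianReal_map_add_div (hn : n ≠ 0) (s : ℝ) :
    (gaussianReal 0 n).map (fun t => (s + t) / n) = gaussianReal (s / n) (n : ℝ≥0)⁻¹ := by
  have hcomp : (fun t => (s + t) / n) = (· / (n : ℝ)) ∘ (s + ·) := rfl
  rw [hcomp, ← Measure.map_map (by fun_prop) (by fun_prop), gaussianReal_map_const_add,
    gaussianReal_map_div_const, zero_add]
  congr 1
  ext; push_cast; field_simp

theorem exp_mul_sub_eq_gaussianPDFReal (hn : n ≠ 0) (s θ : ℝ) :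
    exp (θ * s - n * θ ^ 2 / 2)
      = √(2 * π / n) * exp (s ^ 2 / (2 * n)) * gaussianPDFReal (s / n) (n : ℝ≥0)⁻¹ θ := by
  have hsqrt : √(2 * π / n) ≠ 0 := by positivity
  rw [gaussianPDFReal, NNReal.coe_inv, NNReal.coe_natCast, ← div_eq_mul_inv, mul_mul_mul_comm,
    mul_inv_cancel₀ hsqrt, one_mul, ← exp_add]
  congr 1; field_simp; ring

theorem integral_exp_mul_sub (hn : n ≠ 0) (s : ℝ) :
    ∫ θ, exp (θ * s - n * θ ^ 2 / 2) = √(2 * π / n) * exp (s ^ 2 / (2 * n)) := by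
  simp_rw [exp_mul_sub_eq_gaussianPDFReal hn s]
  rw [integral_const_mul, integral_gaussianPDFReal_eq_one _ (by positivity), mul_one]

theorem integrable_exp_sq_div [IsFiniteMeasure σ] (hσ : ∀ᵐ s ∂σ, s ∈ Icc (-M) M) :
    Integrable (fun s => exp (s ^ 2 / (2 * n))) σ := by
  refine .of_bound (by fun_prop) (exp (M ^ 2 / (2 * n))) (hσ.mono fun s hs => ?_)
  rw [norm_of_nonneg (exp_pos _).le]
  have := sq_le_sq' hs.1 hs.2
  gcongr

theorem integrable_exp_mul_sub_prod [SFinite σ] (hn : n ≠ 0)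
    (hexp : Integrable (fun s => exp (s ^ 2 / (2 * n))) σ) :
    Integrable (fun p : ℝ × ℝ => exp (p.2 * p.1 - n * p.2 ^ 2 / 2)) (σ.prod volume) := by
  refine (integrable_prod_iff (by fun_prop)).2 ⟨ae_of_all _ fun s => ?_, ?_⟩
  · simp_rw [exp_mul_sub_eq_gaussianPDFReal hn s]
    exact (integrable_gaussianPDFReal _ _).const_mul _
  · simp_rw [norm_of_nonneg (exp_pos _).le, integral_exp_mul_sub hn]
    exact hexp.const_mul _

theorem integral_exp_mul_sub_prod [SFinite σ] (hn : n ≠ 0)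
    (hexp : Integrable (fun s => exp (s ^ 2 / (2 * n))) σ) :
    ∫ p : ℝ × ℝ, exp (p.2 * p.1 - n * p.2 ^ 2 / 2) ∂(σ.prod volume)
      = √(2 * π / n) * ∫ s, exp (s ^ 2 / (2 * n)) ∂σ := by
  rw [integral_prod _ (integrable_exp_mul_sub_prod hn hexp)]
  simp only [integral_exp_mul_sub hn, integral_const_mul]

theorem hsMeasure_eq_map [SFinite σ] (hn : n ≠ 0)
    (hexp : Integrable (fun s => exp (s ^ 2 / (2 * n))) σ) :
    hsMeasure σ n = ((σ.tilted fun s => s ^ 2 / (2 * n)).prod (gaussianReal 0 n)).map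
      fun p : ℝ × ℝ => (p.1, (p.1 + p.2) / n) := by
  classical
  ext A hA
  have hslice (s : ℝ) : MeasurableSet (Prod.mk s ⁻¹' A) := measurable_prodMk_left hA
  rw [Measure.map_apply (by fun_prop) hA, Measure.prod_apply (by measurability),
    lintegral_tilted, hsMeasure, tilted_apply' _ _ hA, ← lintegral_indicator hA,
    lintegral_prod _ (by measurability)]
  refine lintegral_congr fun s => ?_
  have hgauss : gaussianReal 0 n (Prod.mk s ⁻¹' ((fun p : ℝ × ℝ => (p.1, (p.1 + p.2) / n)) ⁻¹' A))
      = ∫⁻ θ in Prod.mk s ⁻¹' A, ENNReal.ofReal (gaussianPDFReal (s / n) (n : ℝ≥0)⁻¹ θ) := by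
    rw [← gaussianPDF_def, ← gaussianReal_apply _ (by positivity), ← gaussianReal_map_add_div hn,
      Measure.map_apply (by fun_prop) (hslice s)]
    rfl
  have hdensity (θ : ℝ) : exp (θ * s - n * θ ^ 2 / 2)
        / ∫ p : ℝ × ℝ, exp (p.2 * p.1 - n * p.2 ^ 2 / 2) ∂(σ.prod volume)
      = exp (s ^ 2 / (2 * n)) / (∫ s, exp (s ^ 2 / (2 * n)) ∂σ)
        * gaussianPDFReal (s / n) (n : ℝ≥0)⁻¹ θ := by
    rw [integral_exp_mul_sub_prod hn hexp, exp_mul_sub_eq_gaussianPDFReal hn, mul_assoc,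
      mul_div_mul_left _ _ (by positivity : √(2 * π / n) ≠ 0), mul_div_right_comm]
  rw [hgauss, ← lintegral_const_mul _ (by fun_prop), ← lintegral_indicator (hslice s)]
  refine lintegral_congr fun θ => ?_
  have hnonneg : 0 ≤ exp (s ^ 2 / (2 * n)) / ∫ s, exp (s ^ 2 / (2 * n)) ∂σ := by positivity
  simp only [indicator_apply, mem_preimage, hdensity, ENNReal.ofReal_mul hnonneg]

end HubbardStratonovich

section HubbardStratonovichMoments

variable {σ : Measure ℝ} [IsProbabilityMeasure σ] {n : ℕ} {M : ℝ}

theorem isProbabilityMeasure_hsMeasure (hn : n ≠ 0)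
    (hexp : Integrable (fun s => exp (s ^ 2 / (2 * n))) σ) :
    IsProbabilityMeasure (hsMeasure σ n) := by
  have := isProbabilityMeasure_tilted hexp
  rw [hsMeasure_eq_map hn hexp]
  exact Measure.isProbabilityMeasure_map (by fun_prop)

theorem map_fst_hsMeasure (hn : n ≠ 0) (hexp : Integrable (fun s => exp (s ^ 2 / (2 * n))) σ) :
    (hsMeasure σ n).map Prod.fst = σ.tilted fun s => s ^ 2 / (2 * n) := by
  rw [hsMeasure_eq_map hn hexp, Measure.map_map (by fun_prop) (by fun_prop)]
  exact measurePreserving_fst.map_eq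

omit [IsProbabilityMeasure σ] in
theorem ae_fst_mem_Icc_hsMeasure (hσ : ∀ᵐ s ∂σ, s ∈ Icc (-M) M) :
    ∀ᵐ p ∂hsMeasure σ n, p.1 ∈ Icc (-M) M :=
  (tilted_absolutelyContinuous _ _).ae_le (Measure.quasiMeasurePreserving_fst.ae hσ)

theorem integral_hsMeasure (hn : n ≠ 0) (hexp : Integrable (fun s => exp (s ^ 2 / (2 * n))) σ)
    {G : ℝ × ℝ → ℝ} (hG : Measurable G) :
    ∫ p, G p ∂hsMeasure σ n = ∫ p : ℝ × ℝ, G (p.1, (p.1 + p.2) / n)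
      ∂((σ.tilted fun s => s ^ 2 / (2 * n)).prod (gaussianReal 0 n)) := by
  rw [hsMeasure_eq_map hn hexp, integral_map (by fun_prop) hG.aestronglyMeasurable]

theorem integral_hsMeasure_eq_integral_integral
    (hn : n ≠ 0) (hexp : Integrable (fun s => exp (s ^ 2 / (2 * n))) σ)
    {G : ℝ × ℝ → ℝ} (hG : Integrable G (hsMeasure σ n)) :
    ∫ p, G p ∂hsMeasure σ n
      = (∫ p : ℝ × ℝ, exp (p.2 * p.1 - n * p.2 ^ 2 / 2) ∂(σ.prod volume))⁻¹
        * ∫ θ, ∫ s, exp (θ * s - n * θ ^ 2 / 2) * G (s, θ) ∂σ := by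
  have hG' := (integrable_tilted_iff (integrable_exp_mul_sub_prod hn hexp) G).1 hG
  simp only [smul_eq_mul] at hG'
  rw [← integral_prod_symm _ hG', ← integral_const_mul, hsMeasure, integral_tilted]
  simp only [smul_eq_mul, div_eq_inv_mul, mul_assoc]

theorem integral_hsMeasure_le_of_forall_integral_le
    (hn : n ≠ 0) (hexp : Integrable (fun s => exp (s ^ 2 / (2 * n))) σ)
    {G₁ G₂ : ℝ × ℝ → ℝ} (hG₁ : Integrable G₁ (hsMeasure σ n)) (hG₂ : Integrable G₂ (hsMeasure σ n))
    (h : ∀ θ, ∫ s, exp (θ * s - n * θ ^ 2 / 2) * G₁ (s, θ) ∂σ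
      ≤ ∫ s, exp (θ * s - n * θ ^ 2 / 2) * G₂ (s, θ) ∂σ) :
    ∫ p, G₁ p ∂hsMeasure σ n ≤ ∫ p, G₂ p ∂hsMeasure σ n := by
  have hint := integrable_exp_mul_sub_prod hn hexp
  rw [integral_hsMeasure_eq_integral_integral hn hexp hG₁,
    integral_hsMeasure_eq_integral_integral hn hexp hG₂]
  refine mul_le_mul_of_nonneg_left (integral_mono ?_ ?_ h) (by positivity)
  · exact ((integrable_tilted_iff hint G₁).1 hG₁).integral_prod_right
  · exact ((integrable_tilted_iff hint G₂).1 hG₂).integral_prod_right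

theorem integral_sub_mul_snd_mul_fst_hsMeasure (hn : n ≠ 0)
    (hexp : Integrable (fun s => exp (s ^ 2 / (2 * n))) σ) {F : ℝ → ℝ} (hF : Measurable F) :
    ∫ p, (p.1 - n * p.2) * F p.1 ∂hsMeasure σ n = 0 := by
  rw [integral_hsMeasure hn hexp (by fun_prop)]
  have hnoise (p : ℝ × ℝ) : (p.1 - n * ((p.1 + p.2) / n)) * F p.1 = F p.1 * -p.2 := by
    field_simp; ring
  simp only [hnoise]
  rw [integral_prod_mul (f := F) (g := fun t => -t), integral_neg, integral_id_gaussianReal]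
  simp

theorem integral_unitStep_snd_hsMeasure (hn : n ≠ 0)
    (hexp : Integrable (fun s => exp (s ^ 2 / (2 * n))) σ) (c : ℝ) :
    ∫ p, unitStep (n * p.2 - c) ∂hsMeasure σ n
      = ∫ p, noiseAverage (gaussianReal 0 n) unitStep (p.1 - c) ∂hsMeasure σ n := by
  have hstep : Measurable unitStep := monotone_unitStep.measurable
  have := isProbabilityMeasure_tilted hexp
  have hsmooth : Measurable (noiseAverage (gaussianReal 0 n) unitStep) :=
    monotone_noiseAverage_unitStep.measurable
  rw [integral_hsMeasure hn hexp (by fun_prop), integral_hsMeasure hn hexp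
    (G := fun p => noiseAverage (gaussianReal 0 n) unitStep (p.1 - c)) (by fun_prop)]
  have hnoise (p : ℝ × ℝ) :
      unitStep (n * ((p.1 + p.2) / n) - c) = unitStep (p.1 - c + p.2) := by
    congr 1; field_simp; ring
  simp only [noiseAverage, hnoise]
  rw [integral_prod _ (.of_mem_Icc 0 1 (by fun_prop) (ae_of_all _ fun _ => unitStep_mem_Icc _))]
  simp [integral_fun_fst fun s => ∫ t, unitStep (s - c + t) ∂gaussianReal 0 n]

theorem integrable_exp_mul_snd_hsMeasure (hn : n ≠ 0) (hσ : ∀ᵐ s ∂σ, s ∈ Icc (-M) M) (l : ℝ) :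
    Integrable (fun p => exp (l * p.2)) (hsMeasure σ n) := by
  have hexp := integrable_exp_sq_div (n := n) hσ
  have := isProbabilityMeasure_tilted hexp
  rw [hsMeasure_eq_map hn hexp, integrable_map_measure (by fun_prop) (by fun_prop)]
  have hsplit : (fun p : ℝ × ℝ => exp (l * p.2)) ∘ (fun p : ℝ × ℝ => (p.1, (p.1 + p.2) / n))
      = fun p : ℝ × ℝ => exp (l / n * p.1) * exp (l / n * p.2) := by
    ext p; rw [← exp_add]; simp only [Function.comp_apply]; congr 1; ring
  rw [hsplit]
  exact (integrable_exp_mul_of_mem_Icc aemeasurable_id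
    ((tilted_absolutelyContinuous σ _).ae_le hσ)).mul_prod (integrable_exp_mul_gaussianReal _)

theorem integrable_abs_snd_pow_hsMeasure (hn : n ≠ 0) (hσ : ∀ᵐ s ∂σ, s ∈ Icc (-M) M) (j : ℕ) :
    Integrable (fun p => |p.2| ^ j) (hsMeasure σ n) := by
  have huniv : integrableExpSet Prod.snd (hsMeasure σ n) = univ :=
    eq_univ_of_forall (integrable_exp_mul_snd_hsMeasure hn hσ)
  exact integrable_pow_abs_of_mem_interior_integrableExpSet (by simp [huniv]) j

theorem integrable_comp_snd_hsMeasure (hn : n ≠ 0) (hσ : ∀ᵐ s ∂σ, s ∈ Icc (-M) M)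
    {f : ℝ → ℝ} {C : ℝ} {j : ℕ} (hf : Measurable f) (hC : ∀ θ, |f θ| ≤ C * |θ| ^ j) :
    Integrable (fun p => f p.2) (hsMeasure σ n) :=
  ((integrable_abs_snd_pow_hsMeasure hn hσ j).const_mul C).mono'
    (hf.comp measurable_snd).aestronglyMeasurable (ae_of_all _ fun p => hC p.2)

theorem integral_exp_mul_exp_neg_sq_hsMeasure (hn : n ≠ 0)
    (hexp : Integrable (fun s => exp (s ^ 2 / (2 * n))) σ) (y l : ℝ) :
    ∫ p, exp (l * (p.2 - y)) * exp (-(p.1 - n * y) ^ 2 / (2 * n)) ∂hsMeasure σ n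
      = √(2 * π / n) * exp (l ^ 2 / n)
        * (∫ p : ℝ × ℝ, exp (p.2 * p.1 - n * p.2 ^ 2 / 2) ∂(σ.prod volume))⁻¹
        * ∫ s, exp ((y + l / n) * s - n * (y + l / n) ^ 2 / 2) ∂σ := by
  rw [integral_hsMeasure hn hexp (by fun_prop)]
  have hsplit (p : ℝ × ℝ) : exp (l * ((p.1 + p.2) / n - y)) * exp (-(p.1 - n * y) ^ 2 / (2 * n))
      = exp (l * (p.1 / n - y) - (p.1 - n * y) ^ 2 / (2 * n)) * exp (l / n * p.2) := by
    rw [← exp_add, ← exp_add]; congr 1; ring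
  simp only [hsplit]
  rw [integral_prod_mul (f := fun s => exp (l * (s / n - y) - (s - n * y) ^ 2 / (2 * n)))
    (g := fun t => exp (l / n * t)), integral_tilted, integral_exp_mul_sub_prod hn hexp]
  have hmgf : ∫ t, exp (l / n * t) ∂gaussianReal 0 n = exp (l ^ 2 / (2 * n)) := by
    refine (congrFun mgf_id_gaussianReal (l / n)).trans ?_
    congr 1; push_cast; field_simp; ring
  have hsq (s : ℝ) : (exp (s ^ 2 / (2 * n)) / ∫ s, exp (s ^ 2 / (2 * n)) ∂σ)
        * exp (l * (s / n - y) - (s - n * y) ^ 2 / (2 * n))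
      = (∫ s, exp (s ^ 2 / (2 * n)) ∂σ)⁻¹ * exp (l ^ 2 / (2 * n))
        * exp ((y + l / n) * s - n * (y + l / n) ^ 2 / 2) := by
    rw [div_mul_eq_mul_div, ← exp_add, mul_assoc, ← exp_add, div_eq_inv_mul]
    congr 2; field_simp; ring
  have hsqrt : √(2 * π / n) ≠ 0 := by positivity
  have hdouble : exp (l ^ 2 / n) = exp (l ^ 2 / (2 * n)) * exp (l ^ 2 / (2 * n)) := by
    rw [← exp_add]; congr 1; ring
  simp only [smul_eq_mul, hsq, integral_const_mul]
  rw [hmgf, hdouble]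
  field_simp

end HubbardStratonovichMoments

section CurieWeissField

/-- The law of the total spin of `n` independent spins of law `ρ`. -/
noncomputable def sumLaw (ρ : Measure ℝ) (n : ℕ) : Measure ℝ :=
  (Measure.pi fun _ : Fin n => ρ).map fun x => ∑ i, x i

/-- The probability density proportional to `exp (-n * h)`. For `h = hfun ρ` it is the density of
the auxiliary field of the Curie–Weiss model. -/
noncomputable def fieldDensity (h : ℝ → ℝ) (n : ℕ) (θ : ℝ) : ℝ :=
  exp (-n * h θ) / ∫ t, exp (-n * h t)

theorem fieldDensity_nonneg (h : ℝ → ℝ) (n : ℕ) (θ : ℝ) : 0 ≤ fieldDensity h n θ := by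
  unfold fieldDensity; positivity

variable {ρ : Measure ℝ} [IsProbabilityMeasure ρ] {L : ℝ} {n : ℕ}

instance isProbabilityMeasure_sumLaw : IsProbabilityMeasure (sumLaw ρ n) :=
  Measure.isProbabilityMeasure_map (by fun_prop)

omit [IsProbabilityMeasure ρ] in
theorem integral_sumLaw {f : ℝ → ℝ} (hf : Measurable f) :
    ∫ s, f s ∂sumLaw ρ n = ∫ x : Fin n → ℝ, f (∑ i, x i) ∂Measure.pi fun _ => ρ :=
  integral_map (by fun_prop) hf.aestronglyMeasurable

theorem integral_cwMeasure {f : ℝ → ℝ} (hf : Measurable f) :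
    ∫ x, f (∑ i, x i) ∂cwMeasure ρ n = ∫ s, f s ∂(sumLaw ρ n).tilted fun s => s ^ 2 / (2 * n) := by
  have htilted : cwMeasure ρ n
      = (Measure.pi fun _ : Fin n => ρ).tilted fun x => (∑ i, x i) ^ 2 / (2 * n) := rfl
  rw [htilted, integral_tilted, integral_tilted, integral_sumLaw (by fun_prop)]
  simp only [smul_eq_mul]
  rw [integral_sumLaw (by fun_prop)]

variable (hL : ∀ᵐ x ∂ρ, x ∈ Icc (-L) L)
include hL

theorem sumLaw_mem_Icc : ∀ᵐ s ∂sumLaw ρ n, s ∈ Icc (-(n * L)) (n * L) :=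
  (ae_map_iff (by fun_prop) measurableSet_Icc).2
    ((pi_mem_Icc hL).mono fun _ hx => sum_mem_Icc_of_forall hx)

theorem integrable_exp_sq_div_sumLaw :
    Integrable (fun s => exp (s ^ 2 / (2 * n))) (sumLaw ρ n) :=
  integrable_exp_sq_div (sumLaw_mem_Icc hL)

theorem integral_exp_mul_sub_sumLaw (θ : ℝ) :
    ∫ s, exp (θ * s - n * θ ^ 2 / 2) ∂sumLaw ρ n = exp (-n * hfun ρ θ) := by
  have := isProbabilityMeasure_tilted_id hL θ
  have hθ : Integrable (fun x : Fin n → ℝ => exp (θ * ∑ i, x i)) (Measure.pi fun _ => ρ) :=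
    (integrableExpSet_sum_pi hL).ge (mem_univ θ)
  have := isProbabilityMeasure_tilted hθ
  have h := integral_exp_mul_sum_mul (n := n) hL θ 1
  simp only [Pi.one_apply, mul_one, integral_const, probReal_univ, smul_eq_mul] at h
  rw [integral_sumLaw (by fun_prop), h]

theorem integrable_exp_neg_mul_hfun (hn : n ≠ 0) : Integrable fun θ => exp (-n * hfun ρ θ) := by
  simpa only [integral_exp_mul_sub_sumLaw hL] using
    (integrable_exp_mul_sub_prod hn (integrable_exp_sq_div_sumLaw (n := n) hL)).integral_prod_right

theorem integrable_fieldDensity (hn : n ≠ 0) : Integrable (fieldDensity (hfun ρ) n) :=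
  (integrable_exp_neg_mul_hfun hL hn).div_const _

theorem integral_exp_mul_sub_sumLaw_prod (hn : n ≠ 0) :
    ∫ p : ℝ × ℝ, exp (p.2 * p.1 - n * p.2 ^ 2 / 2) ∂((sumLaw ρ n).prod volume)
      = ∫ θ, exp (-n * hfun ρ θ) := by
  rw [integral_prod_symm _ (integrable_exp_mul_sub_prod hn (integrable_exp_sq_div_sumLaw hL))]
  simp only [integral_exp_mul_sub_sumLaw hL]

theorem integral_comp_fst_hsMeasure (hn : n ≠ 0) {f : ℝ → ℝ} (hf : Measurable f) :
    ∫ p, f p.1 ∂hsMeasure (sumLaw ρ n) n = ∫ x, f (∑ i, x i) ∂cwMeasure ρ n := by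
  rw [integral_cwMeasure hf, ← map_fst_hsMeasure hn (integrable_exp_sq_div_sumLaw hL),
    integral_map (by fun_prop) hf.aestronglyMeasurable]

theorem integral_comp_snd_hsMeasure (hn : n ≠ 0) {f : ℝ → ℝ}
    (hf : Integrable (fun p => f p.2) (hsMeasure (sumLaw ρ n) n)) :
    ∫ p, f p.2 ∂hsMeasure (sumLaw ρ n) n = ∫ θ, f θ * fieldDensity (hfun ρ) n θ := by
  rw [integral_hsMeasure_eq_integral_integral hn (integrable_exp_sq_div_sumLaw hL) hf,
    integral_exp_mul_sub_sumLaw_prod hL hn, ← integral_const_mul]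
  simp only [integral_mul_const, integral_exp_mul_sub_sumLaw hL, fieldDensity]
  congr with θ
  ring

theorem HasSteinBound.integral_exp_mul_le_sumLaw {F A B : ℝ → ℝ} (h : HasSteinBound F A B)
    (θ : ℝ) :
    ∫ s, exp (θ * s - n * θ ^ 2 / 2) * ((s - n * (θ - deriv (hfun ρ) θ)) * F s) ∂sumLaw ρ n
      ≤ ∫ s, exp (θ * s - n * θ ^ 2 / 2) * (n * (1 - deriv (deriv (hfun ρ)) θ)
        * (A (s + 2 * L) - B (s - 2 * L))) ∂sumLaw ρ n := by
  have hF := h.measurable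
  have hAB : Measurable fun s => A (s + 2 * L) - B (s - 2 * L) :=
    h.measurable_sub_comp (by fun_prop) (by fun_prop)
  rw [integral_sumLaw (by fun_prop), integral_sumLaw (by fun_prop)]
  exact h.integral_exp_mul_le hL θ

theorem HasSteinBound.integral_hsMeasure_le {F A B : ℝ → ℝ} (h : HasSteinBound F A B) (hn : n ≠ 0)
    {k : ℕ} {a : ℝ} (hw : IsFlatWell (hfun ρ) k a) :
    ∫ p, deriv (hfun ρ) p.2 * F p.1 ∂hsMeasure (sumLaw ρ n) n
        + ∫ p, deriv (deriv (hfun ρ)) p.2 * (A (p.1 + 2 * L) - B (p.1 - 2 * L))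
          ∂hsMeasure (sumLaw ρ n) n
      ≤ ∫ p, (A (p.1 + 2 * L) - B (p.1 - 2 * L)) ∂hsMeasure (sumLaw ρ n) n := by
  have hexp := integrable_exp_sq_div_sumLaw (n := n) hL
  have hs := sumLaw_mem_Icc (n := n) hL
  have := isProbabilityMeasure_hsMeasure hn hexp
  obtain ⟨C₁, -, hC₁⟩ := hw.deriv_le
  obtain ⟨C₂, -, hC₂⟩ := hw.deriv_deriv_le
  have hdrift := h.integrable_mul_comp
    (integrable_comp_snd_hsMeasure hn hs (measurable_deriv _) hC₁) measurable_fst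
  have hcentred := h.integrable_mul_comp (T := Prod.fst) (Y := fun p => p.1 - n * p.2)
    (μ := hsMeasure (sumLaw ρ n) n)
    ((Integrable.of_mem_Icc _ _ (by fun_prop) (ae_fst_mem_Icc_hsMeasure hs)).sub
      (integrable_comp_snd_hsMeasure (f := fun θ => n * θ) (C := n) (j := 1) hn hs (by fun_prop)
        fun θ => by simp [abs_mul])) measurable_fst
  have hdiff := h.integrable_sub_comp (μ := hsMeasure (sumLaw ρ n) n)
    (X := fun p => p.1 + 2 * L) (T := fun p => p.1 - 2 * L) (by fun_prop) (by fun_prop)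
  have hcurv := h.integrable_mul_sub_comp (X := fun p => p.1 + 2 * L) (T := fun p => p.1 - 2 * L)
    (integrable_comp_snd_hsMeasure hn hs (measurable_deriv _) hC₂) (by fun_prop) (by fun_prop)
  have hstein := integral_hsMeasure_le_of_forall_integral_le hn hexp
    (G₁ := fun p => (p.1 - n * p.2) * F p.1 + n * (deriv (hfun ρ) p.2 * F p.1))
    (G₂ := fun p => n * ((A (p.1 + 2 * L) - B (p.1 - 2 * L))
      - deriv (deriv (hfun ρ)) p.2 * (A (p.1 + 2 * L) - B (p.1 - 2 * L))))
    (hcentred.add (hdrift.const_mul _)) ((hdiff.sub hcurv).const_mul _) fun θ => by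
      convert h.integral_exp_mul_le_sumLaw (n := n) hL θ using 4 <;> ring
  rw [integral_add hcentred (hdrift.const_mul _), integral_const_mul, integral_const_mul,
    integral_sub hdiff hcurv, integral_sub_mul_snd_mul_fst_hsMeasure hn hexp h.measurable,
    zero_add] at hstein
  linarith [le_of_mul_le_mul_left hstein (by positivity)]

end CurieWeissField

section Localization

theorem add_pow_le_two_pow_mul {x y : ℝ} (hx : 0 ≤ x) (hy : 0 ≤ y) (j : ℕ) :
    (x + y) ^ j ≤ 2 ^ j * (x ^ j + y ^ j) :=
  (add_pow_le hx hy j).trans <| by gcongr <;> [norm_num; lia]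

theorem pow_le_factorial_mul_exp {x q : ℝ} (hx : 0 ≤ x) (hq : 0 < q) (j : ℕ) :
    x ^ j ≤ j.factorial * (1 / q) ^ j * exp (q * x) := by
  have h := pow_div_factorial_le_exp (q * x) (by positivity) j
  rw [div_le_iff₀ (by positivity), mul_pow] at h
  calc x ^ j = (1 / q) ^ j * (q ^ j * x ^ j) := by
        rw [← mul_assoc, ← mul_pow, one_div_mul_cancel hq.ne', one_pow, one_mul]
    _ ≤ (1 / q) ^ j * (exp (q * x) * j.factorial) := by gcongr
    _ = j.factorial * (1 / q) ^ j * exp (q * x) := by ring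

theorem abs_pow_le_mul_add_exp {q y : ℝ} (hq : 0 < q) (hy : 0 ≤ y) (j : ℕ) (θ : ℝ) :
    |θ| ^ j ≤ 2 ^ j * (y ^ j + j.factorial * (1 / q) ^ j
      * (exp (q * (θ - y)) + exp (-q * (θ - y)))) := by
  have hexp : exp (q * |θ - y|) ≤ exp (q * (θ - y)) + exp (-q * (θ - y)) := by
    simpa only [abs_mul, abs_of_pos hq, neg_mul] using exp_abs_le (q * (θ - y))
  have htri : |θ| ≤ y + |θ - y| := by
    simpa [abs_of_nonneg hy] using abs_add_le y (θ - y)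
  calc |θ| ^ j ≤ (y + |θ - y|) ^ j := by gcongr
    _ ≤ 2 ^ j * (y ^ j + |θ - y| ^ j) := add_pow_le_two_pow_mul hy (abs_nonneg _) j
    _ ≤ _ := by
      gcongr
      exact (pow_le_factorial_mul_exp (abs_nonneg _) hq j).trans (by gcongr)

namespace IsFlatWell

variable {h : ℝ → ℝ} {k : ℕ} {a : ℝ}

theorem exists_abs_sub_le (hw : IsFlatWell h k a) : ∃ C ≥ 0, ∀ θ y δ : ℝ, 0 ≤ y → |θ - y| ≤ δ →
    |h θ - h y| ≤ C * (y ^ (2 * k - 1) + δ ^ (2 * k - 1)) * δ := by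
  obtain ⟨C, hC, hderiv⟩ := hw.deriv_le
  refine ⟨C * 2 ^ (2 * k - 1), by positivity, fun θ y δ hy hθ => ?_⟩
  have hδ : 0 ≤ δ := (abs_nonneg _).trans hθ
  have hbound : ∀ t ∈ uIcc y θ, ‖deriv h t‖ ≤ C * (y + δ) ^ (2 * k - 1) := fun t ht => by
    refine (hderiv t).trans ?_
    gcongr
    have hty : |t - y| ≤ |θ - y| := abs_sub_left_of_mem_uIcc ht
    have htri := abs_add_le (t - y) y
    rw [sub_add_cancel, abs_of_nonneg hy] at htri
    linarith
  calc |h θ - h y| ≤ C * (y + δ) ^ (2 * k - 1) * |θ - y| :=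
        (convex_uIcc y θ).norm_image_sub_le_of_norm_deriv_le
          (fun t _ => hw.contDiff.differentiable (by simp) t) hbound left_mem_uIcc right_mem_uIcc
    _ ≤ C * (2 ^ (2 * k - 1) * (y ^ (2 * k - 1) + δ ^ (2 * k - 1))) * δ := by
      gcongr
      exact add_pow_le_two_pow_mul hy hδ _
    _ = _ := by ring

theorem exists_fieldDensity_le_of_abs_sub_le (hw : IsFlatWell h k a) (hk : 1 ≤ k) {B : ℝ}
    (hB : 0 ≤ B) : ∃ D ≥ 0, ∀ n : ℕ, n ≠ 0 → ∀ y ≥ 0, √n * y ^ (2 * k - 1) ≤ 1 →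
      ∀ θ, |θ - y| ≤ B / √n → fieldDensity h n θ ≤ D * fieldDensity h n y := by
  obtain ⟨C, hC, hsub⟩ := hw.exists_abs_sub_le
  refine ⟨exp (C * B * (1 + B ^ (2 * k - 1))), by positivity, fun n hn y hy hyn θ hθ => ?_⟩
  have hq : 1 ≤ √(n : ℝ) := one_le_sqrt.2 (by exact_mod_cast Nat.one_le_iff_ne_zero.2 hn)
  have hδ : √n * (B / √n) ^ (2 * k - 1) ≤ B ^ (2 * k - 1) := by
    rw [div_pow, mul_div_assoc', div_le_iff₀ (by positivity), mul_comm]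
    gcongr
    exact le_self_pow₀ hq (by lia)
  have hvar : n * |h θ - h y| ≤ C * B * (1 + B ^ (2 * k - 1)) := by
    calc n * |h θ - h y| ≤ n * (C * (y ^ (2 * k - 1) + (B / √n) ^ (2 * k - 1)) * (B / √n)) := by
          gcongr; exact hsub θ y _ hy hθ
      _ = C * B * (√n * y ^ (2 * k - 1) + √n * (B / √n) ^ (2 * k - 1)) := by
        have := mul_self_sqrt n.cast_nonneg
        generalize (B / √(n : ℝ)) ^ (2 * k - 1) = P
        field_simp
        linear_combination -(C * B * (P + y ^ (2 * k - 1))) * this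
      _ ≤ C * B * (1 + B ^ (2 * k - 1)) := by gcongr
  rw [fieldDensity, fieldDensity, mul_div_assoc', ← exp_add]
  gcongr
  have := neg_abs_le (h θ - h y)
  nlinarith [n.cast_nonneg (α := ℝ)]

end IsFlatWell

theorem integrable_mul_exp_neg_sq_div {Ω : Type*} [MeasurableSpace Ω] {μ : Measure Ω}
    {X Y : Ω → ℝ} (hY : Integrable Y μ) (hX : Measurable X) {v : ℝ} (hv : 0 ≤ v) :
    Integrable (fun ω => Y ω * exp (-X ω ^ 2 / v)) μ :=
  hY.mul_bdd (c := 1) (by fun_prop) (ae_of_all _ fun ω => by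
    rw [norm_of_nonneg (exp_pos _).le, exp_le_one_iff, neg_div, neg_nonpos]
    positivity)

theorem integrable_exp_mul_sub_mul_exp_neg_sq_hsMeasure {σ : Measure ℝ} [IsProbabilityMeasure σ]
    {n : ℕ} {M : ℝ} (hn : n ≠ 0) (hσ : ∀ᵐ s ∂σ, s ∈ Icc (-M) M) (y l : ℝ) :
    Integrable (fun p => exp (l * (p.2 - y)) * exp (-(p.1 - n * y) ^ 2 / (2 * n)))
      (hsMeasure σ n) := by
  refine integrable_mul_exp_neg_sq_div ?_ (by fun_prop) (by positivity)
  simpa only [mul_sub, exp_sub] using (integrable_exp_mul_snd_hsMeasure hn hσ l).div_const _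

section Moments

variable {ρ : Measure ℝ} [IsProbabilityMeasure ρ] {L a : ℝ} {k : ℕ}
  (hL : ∀ᵐ x ∂ρ, x ∈ Icc (-L) L)
include hL

theorem exists_integral_exp_mul_exp_neg_sq_le (hw : IsFlatWell (hfun ρ) k a) (hk : 1 ≤ k) :
    ∃ D ≥ 0, ∀ n : ℕ, n ≠ 0 → ∀ y ≥ 0, √n * y ^ (2 * k - 1) ≤ 1 → ∀ l, |l| ≤ √n →
      ∫ p, exp (l * (p.2 - y)) * exp (-(p.1 - n * y) ^ 2 / (2 * n)) ∂hsMeasure (sumLaw ρ n) n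
        ≤ D * (fieldDensity (hfun ρ) n y / √n) := by
  obtain ⟨D, hD, hnear⟩ := hw.exists_fieldDensity_le_of_abs_sub_le hk zero_le_one
  refine ⟨√(2 * π) * exp 1 * D, by positivity, fun n hn y hy hyn l hl => ?_⟩
  have hq : 0 < √(n : ℝ) := sqrt_pos.2 (by positivity)
  have hsq : √(n : ℝ) * √n = n := mul_self_sqrt n.cast_nonneg
  have hshift : |y + l / n - y| ≤ 1 / √n := by
    rw [add_sub_cancel_left, abs_div, Nat.abs_cast, div_le_div_iff₀ (by positivity) hq, one_mul]
    calc |l| * √n ≤ √n * √n := by gcongr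
      _ = n := hsq
  have hexp : l ^ 2 / n ≤ 1 := by
    rw [div_le_one (by positivity), ← sq_abs, ← hsq, ← sq]
    gcongr
  have hdensity : (∫ θ, exp (-n * hfun ρ θ))⁻¹ * exp (-n * hfun ρ (y + l / n))
      ≤ D * fieldDensity (hfun ρ) n y :=
    (inv_mul_eq_div _ _).trans_le (hnear n hn y hy hyn _ hshift)
  rw [integral_exp_mul_exp_neg_sq_hsMeasure hn (integrable_exp_sq_div_sumLaw hL),
    integral_exp_mul_sub_sumLaw_prod hL hn, integral_exp_mul_sub_sumLaw hL, mul_assoc,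
    sqrt_div (by positivity)]
  calc √(2 * π) / √n * exp (l ^ 2 / n)
        * ((∫ θ, exp (-n * hfun ρ θ))⁻¹ * exp (-n * hfun ρ (y + l / n)))
      ≤ √(2 * π) / √n * exp 1 * (D * fieldDensity (hfun ρ) n y) := by gcongr
    _ = √(2 * π) * exp 1 * D * (fieldDensity (hfun ρ) n y / √n) := by ring

theorem exists_integral_abs_pow_mul_exp_neg_sq_le (hw : IsFlatWell (hfun ρ) k a) (hk : 1 ≤ k)
    (j : ℕ) : ∃ D ≥ 0, ∀ n : ℕ, n ≠ 0 → ∀ y ≥ 0, √n * y ^ (2 * k - 1) ≤ 1 →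
      ∫ p, |p.2| ^ j * exp (-(p.1 - n * y) ^ 2 / (2 * n)) ∂hsMeasure (sumLaw ρ n) n
        ≤ D * ((y ^ j + (1 / √n) ^ j) * (fieldDensity (hfun ρ) n y / √n)) := by
  obtain ⟨D, hD, hexp⟩ := exists_integral_exp_mul_exp_neg_sq_le hL hw hk
  refine ⟨2 ^ j * D * (1 + 2 * j.factorial), by positivity, fun n hn y hy hyn => ?_⟩
  have hq : 0 < √(n : ℝ) := sqrt_pos.2 (by positivity)
  have hs := sumLaw_mem_Icc (n := n) hL
  have hp := fieldDensity_nonneg (hfun ρ) n y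
  set T := fieldDensity (hfun ρ) n y / √n with hT
  have hT0 : 0 ≤ T := by positivity
  let g (l : ℝ) (p : ℝ × ℝ) := exp (l * (p.2 - y)) * exp (-(p.1 - n * y) ^ 2 / (2 * n))
  have hint (l : ℝ) : Integrable (g l) (hsMeasure (sumLaw ρ n) n) :=
    integrable_exp_mul_sub_mul_exp_neg_sq_hsMeasure hn hs y l
  have hle (l : ℝ) (hl : |l| ≤ √n) : ∫ p, g l p ∂hsMeasure (sumLaw ρ n) n ≤ D * T :=
    hexp n hn y hy hyn l hl
  have hpt (p : ℝ × ℝ) : |p.2| ^ j * exp (-(p.1 - n * y) ^ 2 / (2 * n))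
      ≤ 2 ^ j * y ^ j * g 0 p + 2 ^ j * (j.factorial * (1 / √n) ^ j) * (g √n p + g (-√n) p) := by
    refine (mul_le_mul_of_nonneg_right (abs_pow_le_mul_add_exp hq hy j p.2)
      (exp_pos _).le).trans_eq ?_
    simp only [g, zero_mul, exp_zero]
    ring
  have hsum : Integrable (fun p => g √n p + g (-√n) p) (hsMeasure (sumLaw ρ n) n) :=
    (hint _).add (hint _)
  clear_value g T
  calc ∫ p, |p.2| ^ j * exp (-(p.1 - n * y) ^ 2 / (2 * n)) ∂hsMeasure (sumLaw ρ n) n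
      ≤ ∫ p, (2 ^ j * y ^ j * g 0 p + 2 ^ j * (j.factorial * (1 / √n) ^ j) * (g √n p + g (-√n) p))
          ∂hsMeasure (sumLaw ρ n) n :=
        integral_mono (integrable_mul_exp_neg_sq_div (integrable_abs_snd_pow_hsMeasure hn hs j)
          (by fun_prop) (by positivity)) (((hint 0).const_mul _).add (hsum.const_mul _)) hpt
    _ ≤ 2 ^ j * y ^ j * (D * T) + 2 ^ j * (j.factorial * (1 / √n) ^ j) * (D * T + D * T) := by
        rw [integral_add ((hint 0).const_mul _) (hsum.const_mul _),
          integral_const_mul, integral_const_mul, integral_add (hint _) (hint _)]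
        gcongr
        exacts [hle 0 (by simp), hle _ (abs_of_pos hq).le, hle _ (by rw [abs_neg, abs_of_pos hq])]
    _ = 2 ^ j * D * (y ^ j + 2 * j.factorial * (1 / √n) ^ j) * T := by ring
    _ ≤ 2 ^ j * D * ((1 + 2 * j.factorial) * (y ^ j + (1 / √n) ^ j)) * T := by
        gcongr
        have : 0 ≤ (1 / √(n : ℝ)) ^ j := by positivity
        have : 0 ≤ 2 * (j.factorial : ℝ) * y ^ j := by positivity
        linarith
    _ = _ := by ring

end Moments

end Localization

section Comparison

theorem exp_neg_add_sq_div_le {N M B u δ : ℝ} (hN : 0 < N) (hu : |u| ≤ N * M) (hδ : |δ| ≤ B) :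
    exp (-(u + δ) ^ 2 / (2 * N)) ≤ exp (M * B) * exp (-u ^ 2 / (2 * N)) := by
  rw [← exp_add, exp_le_exp, div_le_iff₀ (by positivity), add_mul,
    div_mul_cancel₀ _ (by positivity)]
  have huδ : -(u * δ) ≤ N * M * B := by
    calc -(u * δ) ≤ |u| * |δ| := (neg_le_abs _).trans_eq (abs_mul u δ)
      _ ≤ N * M * B := mul_le_mul hu hδ (abs_nonneg δ) ((abs_nonneg u).trans hu)
  nlinarith [sq_nonneg δ]

theorem abs_unitStep_sub_noiseAverage_add_le {γ : Measure ℝ} [IsProbabilityMeasure γ] {N : ℝ≥0}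
    (hN : N ≠ 0) (hγ : HasSubgaussianMGF id N γ) {M B u δ : ℝ} (hu : |u| ≤ N * M) (hδ : |δ| ≤ B) :
    |unitStep u - noiseAverage γ unitStep (u + δ)| ≤ exp (M * B) * exp (-u ^ 2 / (2 * N)) := by
  have hNpos : (0 : ℝ) < N := by positivity
  by_cases hsign : 0 ≤ u ↔ 0 ≤ u + δ
  · have hstep : unitStep u = unitStep (u + δ) := by
      simp only [unitStep, indicator_apply, mem_Ici, hsign, Pi.one_apply]
    rw [hstep]
    exact (abs_unitStep_sub_noiseAverage_le hγ _).trans (exp_neg_add_sq_div_le hNpos hu hδ)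
  · have huδ : |u| ≤ B := by
      refine le_trans ?_ hδ
      grind
    have hsq : u ^ 2 ≤ N * M * B := by
      rw [← sq_abs, sq]
      exact mul_le_mul hu huδ (abs_nonneg u) ((abs_nonneg u).trans hu)
    calc |unitStep u - noiseAverage γ unitStep (u + δ)| ≤ 1 := by
          have h₁ := unitStep_mem_Icc u
          have h₂ := noiseAverage_unitStep_mem_Icc (γ := γ) (u + δ)
          exact abs_sub_le_iff.2 ⟨by linarith [h₁.2, h₂.1], by linarith [h₁.1, h₂.2]⟩
      _ ≤ exp (M * B) * exp (-u ^ 2 / (2 * N)) := by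
          rw [← exp_add, one_le_exp_iff, neg_div, ← sub_eq_add_neg, sub_nonneg,
            div_le_iff₀ (by positivity)]
          nlinarith [sq_nonneg u]

theorem abs_rampDefect_add_le {γ : Measure ℝ} [IsProbabilityMeasure γ] {N : ℝ≥0} (hN : N ≠ 0)
    (hγ : HasSubgaussianMGF id N γ) (hmean : ∫ t, t ∂γ = 0) {M B u δ : ℝ} (hu : |u| ≤ N * M)
    (hδ : |δ| ≤ B) :
    |rampDefect γ (u + δ)| ≤ √N * exp (M * B) * exp (-u ^ 2 / (2 * N)) := by
  rw [mul_assoc]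
  exact (abs_rampDefect_le hN hγ hmean _).trans <| by
    gcongr; exact exp_neg_add_sq_div_le (by positivity) hu hδ

theorem abs_sub_mul_le_of_mem_Icc {N L s y : ℝ} (hN : 0 ≤ N) (hs : s ∈ Icc (-(N * L)) (N * L))
    (hy : y ∈ Icc 0 1) : |s - N * y| ≤ N * (L + 1) := by
  have hNy : N * y ≤ N * 1 := by gcongr; exact hy.2
  have hNy₀ : 0 ≤ N * y := mul_nonneg hN hy.1
  exact abs_le.2 ⟨by linarith [hs.1], by linarith [hs.2]⟩

theorem mul_pow_le_pow_succ_add_pow_succ {x y : ℝ} (hx : 0 ≤ x) (hy : 0 ≤ y) (j : ℕ) :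
    y ^ j * x ≤ y ^ (j + 1) + x ^ (j + 1) := by
  rcases le_total x y with h | h
  · calc y ^ j * x ≤ y ^ j * y := by gcongr
      _ ≤ _ := by rw [← pow_succ]; exact le_add_of_nonneg_right (by positivity)
  · calc y ^ j * x ≤ x ^ j * x := by gcongr
      _ ≤ _ := by rw [← pow_succ]; exact le_add_of_nonneg_left (by positivity)

theorem abs_integral_mul_le {Ω : Type*} [MeasurableSpace Ω] {μ : Measure Ω} {X Y u v : Ω → ℝ}
    {C K : ℝ} (hX : ∀ᵐ ω ∂μ, |X ω| ≤ C * u ω) (hY : ∀ᵐ ω ∂μ, |Y ω| ≤ K * v ω)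
    (huv : Integrable (fun ω => u ω * v ω) μ) :
    |∫ ω, X ω * Y ω ∂μ| ≤ C * K * ∫ ω, u ω * v ω ∂μ := by
  rw [← integral_const_mul, ← norm_eq_abs]
  refine norm_integral_le_of_norm_le (huv.const_mul _) ?_
  filter_upwards [hX, hY] with ω hXω hYω
  rw [norm_mul]
  refine (mul_le_mul hXω hYω (abs_nonneg _) ((abs_nonneg _).trans hXω)).trans_eq ?_
  ring

variable {ρ : Measure ℝ} [IsProbabilityMeasure ρ] {L a : ℝ} {k : ℕ}
  (hL : ∀ᵐ x ∂ρ, x ∈ Icc (-L) L)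
include hL

theorem exists_integral_sqrt_mul_abs_pow_add_le (hw : IsFlatWell (hfun ρ) k a) (hk : 2 ≤ k) :
    ∃ D ≥ 0, ∀ n : ℕ, n ≠ 0 → ∀ y ≥ 0, √n * y ^ (2 * k - 1) ≤ 1 →
      √n * (∫ p, |p.2| ^ (2 * k - 1) * exp (-(p.1 - n * y) ^ 2 / (2 * n))
            ∂hsMeasure (sumLaw ρ n) n)
          + ∫ p, |p.2| ^ (2 * k - 2) * exp (-(p.1 - n * y) ^ 2 / (2 * n))
            ∂hsMeasure (sumLaw ρ n) n
        ≤ D * ((y ^ (2 * k - 1) + 1 / n) * fieldDensity (hfun ρ) n y) := by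
  obtain ⟨D₁, hD₁, hodd⟩ :=
    exists_integral_abs_pow_mul_exp_neg_sq_le hL hw (by lia) (2 * k - 1)
  obtain ⟨D₂, hD₂, heven⟩ :=
    exists_integral_abs_pow_mul_exp_neg_sq_le hL hw (by lia) (2 * k - 2)
  refine ⟨D₁ + 2 * D₂, by positivity, fun n hn y hy hyn => ?_⟩
  have hq : 0 < √(n : ℝ) := sqrt_pos.2 (by positivity)
  have hp := fieldDensity_nonneg (hfun ρ) n y
  have hyoung := mul_pow_le_pow_succ_add_pow_succ (one_div_pos.2 hq).le hy (2 * k - 2)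
  rw [show 2 * k - 2 + 1 = 2 * k - 1 by lia] at hyoung
  have hsmall : (1 / √(n : ℝ)) ^ (2 * k - 1) ≤ 1 / n := by
    calc (1 / √(n : ℝ)) ^ (2 * k - 1) ≤ (1 / √(n : ℝ)) ^ 2 := by
          refine pow_le_pow_of_le_one (by positivity) ?_ (by lia)
          exact div_le_one_of_le₀ (one_le_sqrt.2 (by exact_mod_cast Nat.one_le_iff_ne_zero.2 hn))
            hq.le
      _ = 1 / n := by rw [div_pow, one_pow, sq_sqrt n.cast_nonneg]
  have hodd' := mul_le_mul_of_nonneg_left (hodd n hn y hy hyn) hq.le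
  have hpow : (1 / √(n : ℝ)) ^ (2 * k - 2) * (1 / √n) = (1 / √n) ^ (2 * k - 1) := by
    rw [← pow_succ]; congr 1; lia
  set f := fieldDensity (hfun ρ) n y
  have hypow : 0 ≤ y ^ (2 * k - 1) := by positivity
  calc _ ≤ √n * (D₁ * ((y ^ (2 * k - 1) + (1 / √n) ^ (2 * k - 1)) * (f / √n)))
          + D₂ * ((y ^ (2 * k - 2) + (1 / √n) ^ (2 * k - 2)) * (f / √n)) :=
        add_le_add hodd' (heven n hn y hy hyn)
    _ = D₁ * ((y ^ (2 * k - 1) + (1 / √n) ^ (2 * k - 1)) * f)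
          + D₂ * ((y ^ (2 * k - 2) * (1 / √n) + (1 / √n) ^ (2 * k - 1)) * f) := by
        rw [← hpow]; field_simp
    _ ≤ D₁ * ((y ^ (2 * k - 1) + 1 / n) * f) + D₂ * ((2 * (y ^ (2 * k - 1) + 1 / n)) * f) := by
        gcongr
        linarith
    _ = _ := by ring

theorem exists_integral_le_add_of_hasSteinBound (hw : IsFlatWell (hfun ρ) k a) (hk : 2 ≤ k)
    {K : ℝ} (hK : 0 ≤ K) : ∃ D ≥ 0, ∀ n : ℕ, n ≠ 0 → ∀ y ∈ Icc 0 1, √n * y ^ (2 * k - 1) ≤ 1 →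
      ∀ F A B, HasSteinBound F A B →
        (∀ s, |s - n * y| ≤ n * (L + 1) →
          |F s| ≤ √n * K * exp (-(s - n * y) ^ 2 / (2 * n)) ∧
          |A (s + 2 * L) - B (s - 2 * L)| ≤ K * exp (-(s - n * y) ^ 2 / (2 * n))) →
        ∫ p, B (p.1 - 2 * L) ∂hsMeasure (sumLaw ρ n) n
          ≤ ∫ p, A (p.1 + 2 * L) ∂hsMeasure (sumLaw ρ n) n
            + D * ((y ^ (2 * k - 1) + 1 / n) * fieldDensity (hfun ρ) n y) := by
  obtain ⟨C₁, hC₁, hderiv⟩ := hw.deriv_le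
  obtain ⟨C₂, hC₂, hderiv₂⟩ := hw.deriv_deriv_le
  obtain ⟨D, hD, hweight⟩ := exists_integral_sqrt_mul_abs_pow_add_le hL hw hk
  refine ⟨K * (C₁ + C₂) * D, by positivity, fun n hn y hy hyn F A B h hloc => ?_⟩
  have hs := sumLaw_mem_Icc (n := n) hL
  have := isProbabilityMeasure_hsMeasure hn (integrable_exp_sq_div_sumLaw (n := n) hL)
  let w (j : ℕ) (p : ℝ × ℝ) := |p.2| ^ j * exp (-(p.1 - n * y) ^ 2 / (2 * n))
  have hw_int (j : ℕ) : Integrable (w j) (hsMeasure (sumLaw ρ n) n) :=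
    integrable_mul_exp_neg_sq_div (integrable_abs_snd_pow_hsMeasure hn hs j) (by fun_prop)
      (by positivity)
  have hnear : ∀ᵐ p ∂hsMeasure (sumLaw ρ n) n, |p.1 - n * y| ≤ n * (L + 1) :=
    (ae_fst_mem_Icc_hsMeasure hs).mono fun p hp => abs_sub_mul_le_of_mem_Icc n.cast_nonneg hp hy
  have hdrift := abs_integral_mul_le (ae_of_all _ fun p => hderiv p.2)
    (hnear.mono fun p hp => (hloc _ hp).1) (hw_int (2 * k - 1))
  have hcurv := abs_integral_mul_le (ae_of_all _ fun p => hderiv₂ p.2)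
    (hnear.mono fun p hp => (hloc _ hp).2) (hw_int (2 * k - 2))
  have hstein := h.integral_hsMeasure_le hL hn hw
  rw [integral_sub (h.integrable_upper_comp (by fun_prop)) (h.integrable_lower_comp (by fun_prop))]
    at hstein
  have hpos (j : ℕ) : 0 ≤ ∫ p, w j p ∂hsMeasure (sumLaw ρ n) n :=
    integral_nonneg fun p => by positivity
  have htotal : C₁ * (√n * K) * (∫ p, w (2 * k - 1) p ∂hsMeasure (sumLaw ρ n) n)
        + C₂ * K * ∫ p, w (2 * k - 2) p ∂hsMeasure (sumLaw ρ n) n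
      ≤ K * (C₁ + C₂) * D * ((y ^ (2 * k - 1) + 1 / n) * fieldDensity (hfun ρ) n y) := by
    have hsplit := mul_le_mul_of_nonneg_left (hweight n hn y hy.1 hyn)
      (mul_nonneg hK (add_nonneg hC₁ hC₂))
    have hodd := mul_nonneg (mul_nonneg (mul_nonneg hK hC₂) (sqrt_nonneg n)) (hpos (2 * k - 1))
    have heven := mul_nonneg (mul_nonneg hK hC₁) (hpos (2 * k - 2))
    simp only [w] at hodd heven ⊢
    linarith
  linarith [neg_le_of_abs_le hdrift, neg_le_of_abs_le hcurv]

end Comparison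

section TailComparison

variable {ρ : Measure ℝ} [IsProbabilityMeasure ρ] {L a : ℝ} {k n : ℕ}
  (hL : ∀ᵐ x ∂ρ, x ∈ Icc (-L) L)
include hL

theorem integral_noiseAverage_hsMeasure_eq_setIntegral (hn : n ≠ 0) (c : ℝ) :
    ∫ p, noiseAverage (gaussianReal 0 n) unitStep (p.1 - n * c) ∂hsMeasure (sumLaw ρ n) n
      = ∫ θ in Ici c, fieldDensity (hfun ρ) n θ := by
  have := isProbabilityMeasure_hsMeasure hn (integrable_exp_sq_div_sumLaw (n := n) hL)
  have hstep : Measurable unitStep := monotone_unitStep.measurable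
  rw [← integral_unitStep_snd_hsMeasure hn (integrable_exp_sq_div_sumLaw hL),
    integral_comp_snd_hsMeasure hL hn (f := fun θ => unitStep (n * θ - n * c)),
    ← integral_indicator measurableSet_Ici]
  · congr with θ
    rw [← mul_sub]
    rcases le_or_gt c θ with hθ | hθ
    · rw [unitStep_of_nonneg (mul_nonneg n.cast_nonneg (sub_nonneg.2 hθ)),
        indicator_of_mem (mem_Ici.2 hθ), one_mul]
    · rw [unitStep_of_neg (mul_neg_of_pos_of_neg (by positivity) (sub_neg.2 hθ)),
        indicator_of_notMem (notMem_Ici.2 hθ), zero_mul]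
  · exact .of_mem_Icc 0 1 (by fun_prop) (ae_of_all _ fun p => unitStep_mem_Icc _)

theorem integral_unitStep_fst_hsMeasure (hn : n ≠ 0) (y : ℝ) :
    ∫ p, unitStep (p.1 - n * y) ∂hsMeasure (sumLaw ρ n) n
      = (cwMeasure ρ n).real {x | n * y ≤ ∑ i, x i} := by
  rw [integral_comp_fst_hsMeasure hL hn (f := fun s => unitStep (s - n * y))
      (monotone_unitStep.measurable.comp (measurable_sub_const _)),
    ← integral_indicator_one (measurableSet_le (by fun_prop) (by fun_prop))]
  refine integral_congr_ae (ae_of_all _ fun x => ?_)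
  simp only [unitStep, indicator_apply, mem_Ici, sub_nonneg, Pi.one_apply, mem_ofPred_eq]

theorem exists_setIntegral_fieldDensity_sub_le (hw : IsFlatWell (hfun ρ) k a) (hk : 1 ≤ k)
    {B : ℝ} (hB : 0 ≤ B) : ∃ D ≥ 0, ∀ n : ℕ, n ≠ 0 → ∀ y ≥ 0, √n * y ^ (2 * k - 1) ≤ 1 →
      ∀ b c, b ≤ c → |b - y| ≤ B / n → |c - y| ≤ B / n →
        (∫ θ in Ici b, fieldDensity (hfun ρ) n θ) - ∫ θ in Ici c, fieldDensity (hfun ρ) n θ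
          ≤ D * (1 / n * fieldDensity (hfun ρ) n y) := by
  obtain ⟨D, hD, hnear⟩ := hw.exists_fieldDensity_le_of_abs_sub_le hk hB
  refine ⟨2 * B * D, by positivity, fun n hn y hy hyn b c hbc hb hc => ?_⟩
  have hint := integrable_fieldDensity hL hn
  have hbound : ∀ θ ∈ uIoc b c, ‖fieldDensity (hfun ρ) n θ‖ ≤ D * fieldDensity (hfun ρ) n y :=
    fun θ hθ => by
      rw [uIoc_of_le hbc] at hθ
      rw [norm_of_nonneg (fieldDensity_nonneg _ _ _)]
      have hθy : |θ - y| ≤ B / n :=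
        abs_le.2 ⟨by linarith [(abs_le.1 hb).1, hθ.1], by linarith [(abs_le.1 hc).2, hθ.2]⟩
      refine hnear n hn y hy hyn θ (hθy.trans ?_)
      have hone : (1 : ℝ) ≤ n := by exact_mod_cast Nat.one_le_iff_ne_zero.2 hn
      gcongr
      exact sqrt_le_self_iff.2 (.inr hone)
  rw [integral_Ici_eq_integral_Ioi, integral_Ici_eq_integral_Ioi,
    intervalIntegral.integral_Ioi_sub_Ioi hint.integrableOn hbc]
  calc ∫ θ in b..c, fieldDensity (hfun ρ) n θ
      ≤ D * fieldDensity (hfun ρ) n y * |c - b| :=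
        (le_abs_self _).trans (intervalIntegral.norm_integral_le_of_norm_le_const hbound)
    _ ≤ D * fieldDensity (hfun ρ) n y * (2 * (B / n)) := by
        gcongr
        · exact mul_nonneg hD (fieldDensity_nonneg _ _ _)
        · rw [abs_of_nonneg (sub_nonneg.2 hbc)]
          linarith [(abs_le.1 hb).1, (abs_le.1 hc).2]
    _ = 2 * B * D * (1 / n * fieldDensity (hfun ρ) n y) := by ring

omit [IsProbabilityMeasure ρ] in
theorem nonneg_of_ae_mem_Icc [NeZero ρ] : 0 ≤ L := by
  obtain ⟨x, hx⟩ := hL.exists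
  linarith [hx.1, hx.2]

theorem exists_setIntegral_le_measureReal_add (hw : IsFlatWell (hfun ρ) k a) (hk : 2 ≤ k) :
    ∃ D ≥ 0, ∀ n : ℕ, n ≠ 0 → ∀ y ∈ Icc 0 1, √n * y ^ (2 * k - 1) ≤ 1 →
      ∫ θ in Ici (y + 4 * L / n), fieldDensity (hfun ρ) n θ
        ≤ (cwMeasure ρ n).real {x | n * y ≤ ∑ i, x i}
          + D * ((y ^ (2 * k - 1) + 1 / n) * fieldDensity (hfun ρ) n y) := by
  have hL₀ := nonneg_of_ae_mem_Icc hL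
  obtain ⟨D, hD, hcomp⟩ :=
    exists_integral_le_add_of_hasSteinBound hL hw hk (exp_pos ((L + 1) * (4 * L))).le
  refine ⟨D, hD, fun n hn y hy hyn => ?_⟩
  have hN : (n : ℝ≥0) ≠ 0 := by exact_mod_cast hn
  have hγ := hasSubgaussianMGF_id_gaussianReal n
  have h := hcomp n hn y hy hyn _ _ _
    ((hasSteinBound_rampDefect hγ.integrable).comp_sub_const (n * y + 2 * L)) fun s hs => by
      have hF : s - (n * y + 2 * L) = s - n * y + -(2 * L) := by ring
      have hA : s + 2 * L - (n * y + 2 * L) = s - n * y := by ring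
      have hB : s - 2 * L - (n * y + 2 * L) = s - n * y + -(4 * L) := by ring
      rw [hF, hA, hB]
      exact ⟨abs_rampDefect_add_le hN hγ integral_id_gaussianReal hs
          (by rw [abs_neg, abs_of_nonneg] <;> linarith),
        abs_unitStep_sub_noiseAverage_add_le hN hγ hs (by rw [abs_neg, abs_of_nonneg]; linarith)⟩
  rw [← integral_noiseAverage_hsMeasure_eq_setIntegral hL hn,
    ← integral_unitStep_fst_hsMeasure hL hn]
  have hA (s : ℝ) : s + 2 * L - (n * y + 2 * L) = s - n * y := by ring
  have hB (s : ℝ) : s - 2 * L - (n * y + 2 * L) = s - n * (y + 4 * L / n) := by field_simp; ring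
  simpa only [hA, hB] using h

theorem exists_measureReal_le_setIntegral_add (hw : IsFlatWell (hfun ρ) k a) (hk : 2 ≤ k) :
    ∃ D ≥ 0, ∀ n : ℕ, n ≠ 0 → ∀ y ∈ Icc 0 1, √n * y ^ (2 * k - 1) ≤ 1 →
      (cwMeasure ρ n).real {x | n * y ≤ ∑ i, x i}
        ≤ (∫ θ in Ici (y - 4 * L / n), fieldDensity (hfun ρ) n θ)
          + D * ((y ^ (2 * k - 1) + 1 / n) * fieldDensity (hfun ρ) n y) := by
  have hL₀ := nonneg_of_ae_mem_Icc hL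
  obtain ⟨D, hD, hcomp⟩ :=
    exists_integral_le_add_of_hasSteinBound hL hw hk (exp_pos ((L + 1) * (4 * L))).le
  refine ⟨D, hD, fun n hn y hy hyn => ?_⟩
  have hN : (n : ℝ≥0) ≠ 0 := by exact_mod_cast hn
  have hγ := hasSubgaussianMGF_id_gaussianReal n
  have h := hcomp n hn y hy hyn _ _ _
    ((hasSteinBound_neg_rampDefect hγ.integrable).comp_sub_const (n * y - 2 * L)) fun s hs => by
      have hF : s - (n * y - 2 * L) = s - n * y + 2 * L := by ring
      have hA : s + 2 * L - (n * y - 2 * L) = s - n * y + 4 * L := by ring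
      have hB : s - 2 * L - (n * y - 2 * L) = s - n * y := by ring
      rw [hF, hA, hB, abs_neg, abs_sub_comm]
      exact ⟨abs_rampDefect_add_le hN hγ integral_id_gaussianReal hs
          (by rw [abs_of_nonneg] <;> linarith),
        abs_unitStep_sub_noiseAverage_add_le hN hγ hs (by rw [abs_of_nonneg]; linarith)⟩
  rw [← integral_noiseAverage_hsMeasure_eq_setIntegral hL hn,
    ← integral_unitStep_fst_hsMeasure hL hn]
  have hA (s : ℝ) : s + 2 * L - (n * y - 2 * L) = s - n * (y - 4 * L / n) := by field_simp; ring
  have hB (s : ℝ) : s - 2 * L - (n * y - 2 * L) = s - n * y := by ring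
  simpa only [hA, hB] using h

theorem exists_abs_measureReal_sub_setIntegral_le (hw : IsFlatWell (hfun ρ) k a) (hk : 2 ≤ k) :
    ∃ D ≥ 0, ∀ n : ℕ, n ≠ 0 → ∀ y ∈ Icc 0 1, √n * y ^ (2 * k - 1) ≤ 1 →
      |(cwMeasure ρ n).real {x | n * y ≤ ∑ i, x i} - ∫ θ in Ici y, fieldDensity (hfun ρ) n θ|
        ≤ D * ((y ^ (2 * k - 1) + 1 / n) * fieldDensity (hfun ρ) n y) := by
  have hL₀ := nonneg_of_ae_mem_Icc hL
  obtain ⟨D₁, hD₁, hlower⟩ := exists_setIntegral_le_measureReal_add hL hw hk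
  obtain ⟨D₂, hD₂, hupper⟩ := exists_measureReal_le_setIntegral_add hL hw hk
  obtain ⟨D₃, hD₃, hshift⟩ := exists_setIntegral_fieldDensity_sub_le hL hw (by lia)
    (by positivity : 0 ≤ 4 * L)
  refine ⟨D₁ + D₂ + D₃, by positivity, fun n hn y hy hyn => ?_⟩
  have hδ : 0 ≤ 4 * L / n := by positivity
  have hright := hshift n hn y hy.1 hyn y (y + 4 * L / n) (by linarith) (by simpa)
    (by rw [add_sub_cancel_left, abs_of_nonneg hδ])
  have hleft := hshift n hn y hy.1 hyn (y - 4 * L / n) y (by linarith)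
    (by rw [sub_sub_cancel_left, abs_neg, abs_of_nonneg hδ]) (by simpa)
  have hf := fieldDensity_nonneg (hfun ρ) n y
  have hypow : 0 ≤ y ^ (2 * k - 1) := pow_nonneg hy.1 _
  have herr : D₃ * (1 / n * fieldDensity (hfun ρ) n y)
      ≤ D₃ * ((y ^ (2 * k - 1) + 1 / n) * fieldDensity (hfun ρ) n y) := by
    gcongr
    exact le_add_of_nonneg_left hypow
  have h₁ : 0 ≤ D₁ * ((y ^ (2 * k - 1) + 1 / n) * fieldDensity (hfun ρ) n y) := by positivity
  have h₂ : 0 ≤ D₂ * ((y ^ (2 * k - 1) + 1 / n) * fieldDensity (hfun ρ) n y) := by positivity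
  rw [add_mul, add_mul]
  exact abs_sub_le_iff.2 ⟨by linarith [hupper n hn y hy hyn], by linarith [hlower n hn y hy hyn]⟩

end TailComparison

section MonomialTail

/-- The tail integral of the unnormalised density `exp (-(a * v ^ (2 * k)))`, the limiting shape of
the magnetization. -/
noncomputable def monomialTail (a : ℝ) (k : ℕ) (z : ℝ) : ℝ :=
  ∫ v in Ici z, exp (-(a * v ^ (2 * k)))

variable {a b z δ : ℝ} {k : ℕ}

theorem integrableOn_pow_mul_exp_neg_mul_pow {m : ℕ} (hb : 0 < b) (hm : 1 ≤ m) (hz : 0 ≤ z)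
    (j : ℕ) : IntegrableOn (fun v => v ^ j * exp (-(b * v ^ m))) (Ici z) := by
  rw [integrableOn_Ici_iff_integrableOn_Ioi]
  simpa using (integrableOn_rpow_mul_exp_neg_mul_rpow (s := j) (p := m)
    (by linarith [j.cast_nonneg (α := ℝ)]) (by positivity) hb).mono_set (Ioi_subset_Ioi hz)

theorem integrableOn_exp_neg_mul_pow (ha : 0 < a) (hk : 1 ≤ k) (hz : 0 ≤ z) :
    IntegrableOn (fun v => exp (-(a * v ^ (2 * k)))) (Ici z) := by
  simpa using integrableOn_pow_mul_exp_neg_mul_pow (m := 2 * k) ha (by lia) hz 0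

theorem monomialTail_anti (ha : 0 < a) (hk : 1 ≤ k) :
    AntitoneOn (monomialTail a k) (Ici 0) := fun _ hz _ _ h =>
  setIntegral_mono_set (integrableOn_exp_neg_mul_pow ha hk hz)
    (ae_of_all _ fun _ => (exp_pos _).le) (Ici_subset_Ici.2 h).eventuallyLE

theorem mul_exp_neg_le_monomialTail (ha : 0 < a) (hk : 1 ≤ k) (hz : 0 ≤ z) (hδ : 0 ≤ δ) :
    δ * exp (-(a * (z + δ) ^ (2 * k))) ≤ monomialTail a k z := by
  have hint := integrableOn_exp_neg_mul_pow ha hk hz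
  calc δ * exp (-(a * (z + δ) ^ (2 * k)))
      = ∫ _ in Icc z (z + δ), exp (-(a * (z + δ) ^ (2 * k))) := by simp [hδ]
    _ ≤ ∫ v in Icc z (z + δ), exp (-(a * v ^ (2 * k))) := by
        refine setIntegral_mono_on (by simp) (hint.mono_set Icc_subset_Ici_self)
          measurableSet_Icc fun v hv => ?_
        have := hz.trans hv.1
        gcongr
        exact hv.2
    _ ≤ monomialTail a k z := setIntegral_mono_set hint
        (ae_of_all _ fun _ => (exp_pos _).le) Icc_subset_Ici_self.eventuallyLE

theorem monomialTail_pos (ha : 0 < a) (hk : 1 ≤ k) (hz : 0 ≤ z) : 0 < monomialTail a k z :=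
  (by positivity : 0 < 1 * exp (-(a * (z + 1) ^ (2 * k)))).trans_le
    (mul_exp_neg_le_monomialTail ha hk hz zero_le_one)

theorem exp_neg_le_mul_monomialTail (ha : 0 < a) (hk : 1 ≤ k) (hz : 0 ≤ z) :
    exp (-(a * z ^ (2 * k)))
      ≤ exp (2 * k * a) * (1 + z) ^ (2 * k - 1) * monomialTail a k z := by
  set δ := ((1 + z) ^ (2 * k - 1))⁻¹ with hδ
  have hδ0 : 0 < δ := by positivity
  have hδ1 : δ ≤ 1 := inv_le_one_of_one_le₀ (one_le_pow₀ (by linarith))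
  have hpow : (z + δ) ^ (2 * k) ≤ z ^ (2 * k) + 2 * k := by
    have h := (le_abs_self _).trans (abs_pow_sub_pow_le (z + δ) z (2 * k))
    rw [add_sub_cancel_left, abs_of_pos hδ0, abs_of_nonneg (by positivity), abs_of_nonneg hz,
      max_eq_left (by linarith)] at h
    have h' : δ * (z + δ) ^ (2 * k - 1) ≤ δ * (1 + z) ^ (2 * k - 1) := by
      rw [add_comm 1 z]; gcongr
    rw [hδ, inv_mul_cancel₀ (by positivity), ← hδ] at h'
    have := mul_le_mul_of_nonneg_right h' (2 * k : ℕ).cast_nonneg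
    push_cast at h this
    linarith
  have h := mul_exp_neg_le_monomialTail ha hk hz hδ0.le
  calc exp (-(a * z ^ (2 * k)))
      = exp (2 * k * a) * exp (-(a * (z ^ (2 * k) + 2 * k))) := by rw [← exp_add]; ring_nf
    _ ≤ exp (2 * k * a) * exp (-(a * (z + δ) ^ (2 * k))) := by gcongr
    _ = exp (2 * k * a) * (1 + z) ^ (2 * k - 1) * (δ * exp (-(a * (z + δ) ^ (2 * k)))) := by
        rw [hδ]; field_simp
    _ ≤ _ := by gcongr

theorem pow_add_le_add_pow {x y : ℝ} {m : ℕ} (hx : 1 ≤ x) (hy : 0 ≤ y) (hm : 1 ≤ m) :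
    x ^ m + y ≤ (x + y) ^ m := by
  obtain ⟨m, rfl⟩ := Nat.exists_eq_add_of_le' hm
  calc x ^ (m + 1) + y ≤ x ^ m * (x + y) := by
        rw [pow_succ, mul_add]
        gcongr
        exact le_mul_of_one_le_left hy (one_le_pow₀ hx)
    _ ≤ (x + y) ^ m * (x + y) := by gcongr; linarith
    _ = (x + y) ^ (m + 1) := (pow_succ _ _).symm

theorem exists_pow_le_mul_exp_sub {q : ℝ} (hq : 0 < q) (j : ℕ) :
    ∃ K ≥ 0, ∀ z v, 0 ≤ z → z ≤ v → v ^ j ≤ K * (1 + z) ^ j * exp (q * (v - z)) := by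
  refine ⟨2 ^ j * (1 + j.factorial * (1 / q) ^ j), by positivity, fun z v hz hv => ?_⟩
  have hw : 0 ≤ v - z := sub_nonneg.2 hv
  have hsplit := add_pow_le_two_pow_mul hz hw j
  rw [add_sub_cancel] at hsplit
  have hz' : z ^ j ≤ (1 + z) ^ j := by gcongr; linarith
  have hone : 1 ≤ (1 + z) ^ j := one_le_pow₀ (by linarith)
  have hexp : 1 ≤ exp (q * (v - z)) := one_le_exp (by positivity)
  calc v ^ j ≤ 2 ^ j * ((1 + z) ^ j * exp (q * (v - z))
        + (1 + z) ^ j * (j.factorial * (1 / q) ^ j * exp (q * (v - z)))) := by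
        refine hsplit.trans ?_
        gcongr
        · exact hz'.trans (le_mul_of_one_le_right (by positivity) hexp)
        · exact (pow_le_factorial_mul_exp hw hq j).trans
            (le_mul_of_one_le_left (by positivity) hone)
    _ = 2 ^ j * (1 + j.factorial * (1 / q) ^ j) * (1 + z) ^ j * exp (q * (v - z)) := by ring

theorem exp_neg_mul_pow_le_monomialTail_mul_exp {v : ℝ} (ha : 0 < a) (hk : 1 ≤ k) (hz : 0 ≤ z)
    (hv : z + 1 ≤ v) :
    exp (-(a * v ^ (2 * k))) ≤ exp a * monomialTail a k z * exp (-(a * (v - z))) := by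
  have hpow := pow_add_le_add_pow (m := 2 * k) (by linarith : 1 ≤ z + 1) (sub_nonneg.2 hv)
    (by lia)
  have htail := mul_exp_neg_le_monomialTail ha hk hz zero_le_one
  rw [one_mul] at htail
  calc exp (-(a * v ^ (2 * k))) ≤ exp (-(a * ((z + 1) ^ (2 * k) + (v - (z + 1))))) := by
        gcongr; simpa using hpow
    _ = exp a * exp (-(a * (z + 1) ^ (2 * k))) * exp (-(a * (v - z))) := by
        rw [← exp_add, ← exp_add]; ring_nf
    _ ≤ _ := by gcongr

theorem exists_pow_mul_exp_neg_le (ha : 0 < a) (hk : 1 ≤ k) (j : ℕ) :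
    ∃ D ≥ 0, ∀ z v, 0 ≤ z → z ≤ v → v ^ j * exp (-(a * v ^ (2 * k))) ≤
      D * (1 + z) ^ j
        * (exp (-(a * v ^ (2 * k))) + monomialTail a k z * exp (-(a / 2 * (v - z)))) := by
  obtain ⟨K, hK, hpow⟩ := exists_pow_le_mul_exp_sub (half_pos ha) j
  refine ⟨max 1 (K * exp a), by positivity, fun z v hz hv => ?_⟩
  have hT := (monomialTail_pos ha hk hz).le
  have := hz.trans hv
  rcases le_total v (z + 1) with hv1 | hv1
  · calc v ^ j * exp (-(a * v ^ (2 * k)))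
        ≤ 1 * (1 + z) ^ j * (exp (-(a * v ^ (2 * k))) + 0) := by
          rw [one_mul, add_zero, add_comm 1 z]; gcongr
      _ ≤ _ := by
          gcongr
          exacts [le_max_left _ _, by positivity]
  · calc v ^ j * exp (-(a * v ^ (2 * k)))
        ≤ K * (1 + z) ^ j * exp (a / 2 * (v - z))
          * (exp a * monomialTail a k z * exp (-(a * (v - z)))) := by
          gcongr
          exacts [hpow z v hz hv, exp_neg_mul_pow_le_monomialTail_mul_exp ha hk hz hv1]
      _ = K * exp a * (1 + z) ^ j * (0 + monomialTail a k z * exp (-(a / 2 * (v - z)))) := by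
          rw [show -(a * (v - z)) = -(a / 2 * (v - z)) + -(a / 2 * (v - z)) by ring, exp_add,
            exp_neg]
          field_simp
          ring
      _ ≤ _ := by
          gcongr
          exacts [le_max_right _ _, (exp_pos _).le]

theorem integral_Ici_exp_neg_mul_sub (hb : 0 < b) :
    ∫ v in Ici z, exp (-(b * (v - z))) = b⁻¹ := by
  have hexp (v : ℝ) : exp (-(b * (v - z))) = exp (b * z) * exp (-b * v) := by
    rw [← exp_add]; ring_nf
  simp only [hexp]
  rw [integral_const_mul, integral_Ici_eq_integral_Ioi, integral_exp_mul_Ioi (neg_lt_zero.2 hb),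
    neg_div_neg_eq, ← mul_div_assoc, ← exp_add]
  simp

theorem integrableOn_exp_neg_mul_sub (hb : 0 < b) (z : ℝ) :
    IntegrableOn (fun v => exp (-(b * (v - z)))) (Ici z) :=
  .of_integral_ne_zero (by rw [integral_Ici_exp_neg_mul_sub hb]; positivity)

theorem exists_integral_pow_mul_exp_neg_le (ha : 0 < a) (hk : 1 ≤ k) (j : ℕ) :
    ∃ D ≥ 0, ∀ z, 0 ≤ z → ∫ v in Ici z, v ^ j * exp (-(a * v ^ (2 * k)))
      ≤ D * (1 + z ^ j) * monomialTail a k z := by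
  obtain ⟨D, hD, h⟩ := exists_pow_mul_exp_neg_le ha hk j
  refine ⟨D * 2 ^ j * (1 + (a / 2)⁻¹), by positivity, fun z hz => ?_⟩
  have hT := (monomialTail_pos ha hk hz).le
  have hint := integrableOn_exp_neg_mul_pow ha hk hz
  have hint' := (integrableOn_exp_neg_mul_sub (half_pos ha) z).const_mul (monomialTail a k z)
  have hpow := add_pow_le_two_pow_mul zero_le_one hz j
  rw [one_pow] at hpow
  calc ∫ v in Ici z, v ^ j * exp (-(a * v ^ (2 * k)))
      ≤ ∫ v in Ici z, D * (1 + z) ^ j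
          * (exp (-(a * v ^ (2 * k))) + monomialTail a k z * exp (-(a / 2 * (v - z)))) :=
        setIntegral_mono_on (integrableOn_pow_mul_exp_neg_mul_pow ha (by lia) hz j)
          ((hint.add hint').const_mul _) measurableSet_Ici fun v hv => h z v hz hv
    _ = D * (1 + z) ^ j * (monomialTail a k z * (1 + (a / 2)⁻¹)) := by
        rw [integral_const_mul, integral_add hint hint', integral_const_mul,
          integral_Ici_exp_neg_mul_sub (half_pos ha), mul_one_add, monomialTail]
    _ ≤ D * (2 ^ j * (1 + z ^ j)) * (monomialTail a k z * (1 + (a / 2)⁻¹)) := by gcongr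
    _ = D * 2 ^ j * (1 + (a / 2)⁻¹) * (1 + z ^ j) * monomialTail a k z := by ring

theorem exists_integral_pow_mul_exp_neg_add_le {c : ℝ} (ha : 0 < a) (hk : 1 ≤ k) (hc : 0 < c)
    (j : ℕ) :
    ∃ D ≥ 0, ∀ z, 0 ≤ z →
      IntegrableOn (fun v => v ^ j * exp (-(a * v ^ (2 * k)))
        + monomialTail a k z * (v ^ j * exp (-(c * v)))) (Ici z) ∧
      ∫ v in Ici z, v ^ j * exp (-(a * v ^ (2 * k)))
        + monomialTail a k z * (v ^ j * exp (-(c * v))) ≤ D * (1 + z ^ j) * monomialTail a k z := by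
  obtain ⟨D, hD, hmoment⟩ := exists_integral_pow_mul_exp_neg_le ha hk j
  have hexp : IntegrableOn (fun v => v ^ j * exp (-(c * v))) (Ici 0) := by
    simpa using integrableOn_pow_mul_exp_neg_mul_pow hc le_rfl le_rfl j
  have hnonneg : ∀ᵐ v ∂volume.restrict (Ici 0), 0 ≤ v ^ j * exp (-(c * v)) :=
    (ae_restrict_mem measurableSet_Ici).mono fun v (hv : 0 ≤ v) => by positivity
  have hI : 0 ≤ ∫ v in Ici 0, v ^ j * exp (-(c * v)) := integral_nonneg_of_ae hnonneg
  refine ⟨D + ∫ v in Ici 0, v ^ j * exp (-(c * v)), by positivity, fun z hz => ?_⟩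
  have hT := (monomialTail_pos ha hk hz).le
  have hint := integrableOn_pow_mul_exp_neg_mul_pow (m := 2 * k) ha (by lia) hz j
  have hint' := (hexp.mono_set (Ici_subset_Ici.2 hz)).const_mul (monomialTail a k z)
  have hmono := setIntegral_mono_set hexp hnonneg (Ici_subset_Ici.2 hz).eventuallyLE
  refine ⟨hint.add hint', ?_⟩
  rw [integral_add hint hint', integral_const_mul, add_mul, add_mul, mul_comm (monomialTail a k z)]
  gcongr
  · exact hmoment z hz
  · exact hmono.trans (le_mul_of_one_le_right hI (le_add_of_nonneg_right (by positivity)))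

end MonomialTail

theorem abs_exp_sub_one_le_abs_mul_exp_abs (x : ℝ) : |exp x - 1| ≤ |x| * exp |x| := by
  have hexp : 1 ≤ exp |x| := one_le_exp (abs_nonneg x)
  refine abs_sub_le_iff.2 ⟨?_, ?_⟩
  · have h := mul_le_mul_of_nonneg_right (one_sub_le_exp_neg x) (exp_pos x).le
    rw [← exp_add, neg_add_cancel, exp_zero] at h
    calc exp x - 1 ≤ x * exp x := by linarith
      _ ≤ |x| * exp |x| := by gcongr <;> exact le_abs_self x
  · calc 1 - exp x ≤ |x| := by linarith [add_one_le_exp x, neg_abs_le x]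
      _ ≤ |x| * exp |x| := le_mul_of_one_le_right (abs_nonneg x) hexp

theorem abs_exp_neg_sub_exp_neg_le {x y E : ℝ} (hE : |x - y| ≤ E) :
    |exp (-x) - exp (-y)| ≤ |x - y| * exp E * exp (-y) := by
  have hfactor : exp (-x) - exp (-y) = (exp (y - x) - 1) * exp (-y) := by
    rw [sub_mul, ← exp_add]; ring_nf
  rw [hfactor, abs_mul, abs_of_pos (exp_pos (-y))]
  gcongr
  refine (abs_exp_sub_one_le_abs_mul_exp_abs _).trans ?_
  rw [abs_sub_comm]
  gcongr

theorem abs_integral_sub_integral_le_of_abs_sub_le {α : Type*} [MeasurableSpace α] {μ : Measure α}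
    {f g b : α → ℝ} (hf : AEStronglyMeasurable f μ) (hg : Integrable g μ) (hb : Integrable b μ)
    (h : ∀ᵐ x ∂μ, |f x - g x| ≤ b x) : |∫ x, f x ∂μ - ∫ x, g x ∂μ| ≤ ∫ x, b x ∂μ := by
  have hdiff : Integrable (fun x => f x - g x) μ := hb.mono' (hf.sub hg.1) h
  have hf' : Integrable f μ := (hdiff.add hg).congr (ae_of_all _ fun x => sub_add_cancel _ _)
  rw [← integral_sub hf' hg]
  exact norm_integral_le_of_norm_le (f := fun x => f x - g x) hb h

section Laplace

/-- The potential `n * h` in the variable `v = r * θ`, where `n = r ^ (2 * k)`. -/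
noncomputable def scaledWell (h : ℝ → ℝ) (k : ℕ) (r v : ℝ) : ℝ :=
  r ^ (2 * k) * h (v / r)

variable {h : ℝ → ℝ} {k : ℕ} {a : ℝ}

theorem IsFlatWell.continuous_scaledWell (hw : IsFlatWell h k a) (r : ℝ) :
    Continuous (scaledWell h k r) := by
  have := hw.contDiff.continuous
  unfold scaledWell
  fun_prop

theorem IsFlatWell.exists_abs_scaledWell_sub_le (hw : IsFlatWell h k a) :
    ∃ C ≥ 0, ∀ r > 0, ∀ v ≥ 0,
      |scaledWell h k r v - a * v ^ (2 * k)| ≤ C * (v ^ (2 * k + 2) / r ^ 2) := by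
  obtain ⟨C, hC, htaylor⟩ := hw.sub_monomial_le
  refine ⟨C, hC, fun r hr v hv => ?_⟩
  have hscale : scaledWell h k r v - a * v ^ (2 * k)
      = r ^ (2 * k) * (h (v / r) - a * (v / r) ^ (2 * k)) := by
    rw [scaledWell, div_pow]; field_simp
  have hvr : 0 ≤ v / r := by positivity
  calc |scaledWell h k r v - a * v ^ (2 * k)|
      = r ^ (2 * k) * |h (v / r) - a * (v / r) ^ (2 * k)| := by
        rw [hscale, abs_mul, abs_of_nonneg (by positivity)]
    _ ≤ r ^ (2 * k) * (C * (v / r) ^ (2 * k + 2)) := by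
        gcongr; simpa only [abs_of_nonneg hvr] using htaylor (v / r)
    _ = C * (v ^ (2 * k + 2) / r ^ 2) := by rw [div_pow]; field_simp; ring

theorem mul_le_min_pow {κ v : ℝ} (hk : 1 ≤ k) (hκ : 1 ≤ κ) (hv : κ ≤ v) :
    κ ^ (2 * k - 1) * v ≤ min (v ^ (2 * k)) ((κ ^ (k + 1)) ^ (2 * k - 1) * v) := by
  have hv0 : 0 ≤ v := by linarith
  obtain ⟨m, hm⟩ := Nat.exists_eq_add_of_le' (by lia : 1 ≤ 2 * k)
  rw [hm, add_tsub_cancel_right]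
  refine le_min ?_ ?_
  · rw [pow_succ]; gcongr
  · gcongr; exact le_self_pow₀ hκ (by lia)

theorem IsFlatWell.exists_min_le_scaledWell (hw : IsFlatWell h k a) (hk : 1 ≤ k) :
    ∃ c > 0, ∀ r > 0, ∀ v ≥ 0,
      c * min (v ^ (2 * k)) (r ^ (2 * k - 1) * v) ≤ scaledWell h k r v := by
  obtain ⟨c, hc, hmin⟩ := hw.min_le
  refine ⟨c, hc, fun r hr v hv => ?_⟩
  have hvr : 0 ≤ v / r := by positivity
  have hr' : r ^ (2 * k) = r ^ (2 * k - 1) * r := (pow_sub_one_mul (by lia) r).symm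
  calc c * min (v ^ (2 * k)) (r ^ (2 * k - 1) * v)
      = r ^ (2 * k) * (c * min ((v / r) ^ (2 * k)) (v / r)) := by
        rw [mul_left_comm, mul_min_of_nonneg _ _ (by positivity : 0 ≤ r ^ (2 * k)), div_pow,
          mul_div_cancel₀ _ (by positivity), hr', mul_assoc _ r, mul_div_cancel₀ _ hr.ne']
    _ ≤ scaledWell h k r v := by
        unfold scaledWell
        gcongr
        simpa only [abs_of_nonneg hvr] using hmin (v / r)

theorem IsFlatWell.exists_le_scaledWell (hw : IsFlatWell h k a) (hk : 1 ≤ k) (A : ℝ) :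
    ∃ M ≥ 1, ∃ c > 0, ∀ κ ≥ 1, ∀ v ≥ M * κ, A * κ ^ (2 * k) + c * v ≤ a * v ^ (2 * k) ∧
      A * κ ^ (2 * k) + c * v ≤ scaledWell h k (κ ^ (k + 1)) v := by
  obtain ⟨c, hc, hmin⟩ := hw.exists_min_le_scaledWell hk
  have ha := hw.coeff_pos
  set b := min a c
  have hb0 : 0 < b / 2 := by positivity
  refine ⟨max 1 (A / (b / 2)), le_max_left _ _, b / 2, hb0, fun κ hκ v hv => ?_⟩
  have hκ0 : 0 < κ := by linarith
  have hκv : κ ≤ v := (le_mul_of_one_le_left hκ0.le (le_max_left _ _)).trans hv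
  have hv0 : 0 < v := hκ0.trans_le hκv
  have hpow := mul_le_min_pow hk hκ hκv
  have hlow : A * κ ^ (2 * k) + b / 2 * v ≤ b * (κ ^ (2 * k - 1) * v) := by
    have hA : A * κ ≤ b / 2 * v := by
      rw [← div_le_iff₀' hb0, mul_div_right_comm]
      exact (mul_le_mul_of_nonneg_right (le_max_right _ _) hκ0.le).trans hv
    have hone : v ≤ κ ^ (2 * k - 1) * v := le_mul_of_one_le_left hv0.le (one_le_pow₀ hκ)
    have hmul := mul_le_mul_of_nonneg_left hA (pow_nonneg hκ0.le (2 * k - 1))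
    rw [← pow_sub_one_mul (by lia : 2 * k ≠ 0) κ]
    nlinarith
  refine ⟨hlow.trans ?_, (hlow.trans ?_).trans (hmin _ (by positivity) v hv0.le)⟩
  · gcongr
    exacts [min_le_left _ _, hpow.trans (min_le_left _ _)]
  · gcongr
    exact min_le_right _ _

theorem IsFlatWell.exists_abs_exp_neg_scaledWell_sub_le_of_le (hw : IsFlatWell h k a) (M : ℝ) :
    ∃ D ≥ 0, ∀ κ ≥ 1, ∀ v ∈ Icc 0 (M * κ),
      |exp (-scaledWell h k (κ ^ (k + 1)) v) - exp (-(a * v ^ (2 * k)))|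
        ≤ D / (κ ^ (k + 1)) ^ 2 * (v ^ (2 * k + 2) * exp (-(a * v ^ (2 * k)))) := by
  obtain ⟨C, hC, happrox⟩ := hw.exists_abs_scaledWell_sub_le
  refine ⟨C * exp (C * M ^ (2 * k + 2)), by positivity, fun κ hκ v ⟨hv, hvM⟩ => ?_⟩
  have hκ0 : 0 < κ := by linarith
  have hE : C * (v ^ (2 * k + 2) / (κ ^ (k + 1)) ^ 2) ≤ C * M ^ (2 * k + 2) := by
    rw [← pow_mul, show (k + 1) * 2 = 2 * k + 2 by ring, ← div_pow]
    gcongr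
    rwa [div_le_iff₀ hκ0]
  have happ := happrox _ (by positivity : κ ^ (k + 1) > 0) v hv
  calc |exp (-scaledWell h k (κ ^ (k + 1)) v) - exp (-(a * v ^ (2 * k)))|
      ≤ C * (v ^ (2 * k + 2) / (κ ^ (k + 1)) ^ 2) * exp (C * M ^ (2 * k + 2))
          * exp (-(a * v ^ (2 * k))) :=
        (abs_exp_neg_sub_exp_neg_le (happ.trans hE)).trans (by gcongr)
    _ = _ := by ring

theorem IsFlatWell.exists_abs_exp_neg_scaledWell_sub_le_of_ge (hw : IsFlatWell h k a)
    (hk : 1 ≤ k) :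
    ∃ M ≥ 1, ∃ c > 0, ∀ κ ≥ 1, ∀ v ≥ M * κ,
      |exp (-scaledWell h k (κ ^ (k + 1)) v) - exp (-(a * v ^ (2 * k)))|
        ≤ 1 / (κ ^ (k + 1)) ^ 2
          * (exp (-(a * (κ + 1) ^ (2 * k))) * (v ^ (2 * k + 2) * exp (-(c * v)))) := by
  have ha := hw.coeff_pos
  obtain ⟨M, hM, c, hc, hfar⟩ := hw.exists_le_scaledWell hk (a * 2 ^ (2 * k))
  refine ⟨M, hM, c, hc, fun κ hκ v hvM => ?_⟩
  have hκ0 : 0 < κ := by linarith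
  obtain ⟨hmono, hscaled⟩ := hfar κ hκ v hvM
  have hone : 1 ≤ v ^ (2 * k + 2) / (κ ^ (k + 1)) ^ 2 := by
    rw [one_le_div (by positivity), ← pow_mul, show (k + 1) * 2 = 2 * k + 2 by ring]
    gcongr
    exact (le_mul_of_one_le_left hκ0.le hM).trans hvM
  have hsmall {x : ℝ} (hx : a * 2 ^ (2 * k) * κ ^ (2 * k) + c * v ≤ x) :
      exp (-x) ≤ exp (-(a * (κ + 1) ^ (2 * k))) * exp (-(c * v)) := by
    rw [← exp_add]
    gcongr
    have hpow : (κ + 1) ^ (2 * k) ≤ 2 ^ (2 * k) * κ ^ (2 * k) := by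
      rw [← mul_pow]; gcongr; linarith
    nlinarith
  calc |exp (-scaledWell h k (κ ^ (k + 1)) v) - exp (-(a * v ^ (2 * k)))|
      ≤ exp (-(a * (κ + 1) ^ (2 * k))) * exp (-(c * v)) :=
        abs_sub_le_of_nonneg_of_le (exp_pos _).le (hsmall hscaled) (exp_pos _).le (hsmall hmono)
    _ ≤ v ^ (2 * k + 2) / (κ ^ (k + 1)) ^ 2
          * (exp (-(a * (κ + 1) ^ (2 * k))) * exp (-(c * v))) :=
        le_mul_of_one_le_left (by positivity) hone
    _ = _ := by ring

-- The comparison is local up to a large multiple of `κ`; beyond, both densities are negligible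
-- against the tail at `κ`.
theorem IsFlatWell.exists_abs_exp_neg_scaledWell_sub_le (hw : IsFlatWell h k a) (hk : 1 ≤ k) :
    ∃ D ≥ 0, ∃ c > 0, ∀ κ ≥ 1, ∀ v ≥ 0,
      |exp (-scaledWell h k (κ ^ (k + 1)) v) - exp (-(a * v ^ (2 * k)))|
        ≤ D / (κ ^ (k + 1)) ^ 2 * (v ^ (2 * k + 2) * exp (-(a * v ^ (2 * k)))
          + exp (-(a * (κ + 1) ^ (2 * k))) * (v ^ (2 * k + 2) * exp (-(c * v)))) := by
  obtain ⟨M, -, c, hc, hfar⟩ := hw.exists_abs_exp_neg_scaledWell_sub_le_of_ge hk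
  obtain ⟨D, -, hnear⟩ := hw.exists_abs_exp_neg_scaledWell_sub_le_of_le M
  refine ⟨max D 1, by positivity, c, hc, fun κ hκ v hv => ?_⟩
  rcases le_total v (M * κ) with hvM | hvM
  · refine (hnear κ hκ v ⟨hv, hvM⟩).trans ?_
    gcongr
    exacts [le_max_left _ _, le_add_of_nonneg_right (by positivity)]
  · refine (hfar κ hκ v hvM).trans ?_
    gcongr
    exacts [le_max_right _ _, le_add_of_nonneg_left (by positivity)]

theorem IsFlatWell.exists_abs_integral_exp_neg_scaledWell_sub_le (hw : IsFlatWell h k a)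
    (hk : 1 ≤ k) :
    ∃ D ≥ 0, ∀ κ ≥ 1, ∀ z ∈ Icc 0 κ,
      |(∫ v in Ici z, exp (-scaledWell h k (κ ^ (k + 1)) v)) - monomialTail a k z|
        ≤ D * ((1 + z ^ (2 * k + 2)) / (κ ^ (k + 1)) ^ 2) * monomialTail a k z := by
  have ha := hw.coeff_pos
  obtain ⟨D, hD, c, hc, hpoint⟩ := hw.exists_abs_exp_neg_scaledWell_sub_le hk
  obtain ⟨D', hD', hmoment⟩ := exists_integral_pow_mul_exp_neg_add_le ha hk hc (2 * k + 2)
  refine ⟨D * D', by positivity, fun κ hκ z ⟨hz, hzκ⟩ => ?_⟩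
  obtain ⟨hint, hle⟩ := hmoment z hz
  have htail : exp (-(a * (κ + 1) ^ (2 * k))) ≤ monomialTail a k z := by
    simpa using (mul_exp_neg_le_monomialTail ha hk (hz.trans hzκ) zero_le_one).trans
      (monomialTail_anti ha hk hz (hz.trans hzκ) hzκ)
  have hcont := hw.continuous_scaledWell (κ ^ (k + 1))
  refine (abs_integral_sub_integral_le_of_abs_sub_le (by fun_prop)
    (integrableOn_exp_neg_mul_pow ha hk hz) (hint.const_mul (D / (κ ^ (k + 1)) ^ 2))
    ((ae_restrict_mem measurableSet_Ici).mono fun v (hv : z ≤ v) => ?_)).trans ?_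
  · have hv0 := hz.trans hv
    refine (hpoint κ hκ v hv0).trans ?_
    gcongr
  · rw [integral_const_mul]
    calc _ ≤ D / (κ ^ (k + 1)) ^ 2 * (D' * (1 + z ^ (2 * k + 2)) * monomialTail a k z) := by
          gcongr
      _ = _ := by ring

end Laplace

section Rescaling

variable {h : ℝ → ℝ} {k n : ℕ} {a r : ℝ}

theorem integral_eq_two_mul_integral_Ici_of_even {f : ℝ → ℝ} (hf : f.Even) :
    ∫ x, f x = 2 * ∫ x in Ici 0, f x := by
  rw [integral_Ici_eq_integral_Ioi, ← integral_comp_abs]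
  congr 1 with x
  rcases abs_choice x with hx | hx
  · rw [hx]
  · rw [hx, hf]

theorem integral_Ici_comp_div (hr : 0 < r) (f : ℝ → ℝ) (z : ℝ) :
    ∫ v in Ici z, f (v / r) = r * ∫ θ in Ici (z / r), f θ := by
  rw [← integral_indicator measurableSet_Ici, ← integral_indicator measurableSet_Ici,
    ← abs_of_pos hr, ← smul_eq_mul, ← Measure.integral_comp_div, abs_of_pos hr]
  congr 1 with v
  simp only [indicator, mem_Ici, div_le_div_iff_of_pos_right hr]

theorem integral_Ici_exp_neg_scaledWell (hr : 0 < r) (hrn : r ^ (2 * k) = n) (z : ℝ) :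
    ∫ v in Ici z, exp (-scaledWell h k r v) = r * ∫ θ in Ici (z / r), exp (-n * h θ) := by
  simp only [scaledWell, hrn, ← neg_mul]
  exact integral_Ici_comp_div hr (fun θ => exp (-n * h θ)) z

theorem integral_exp_neg_mul_eq (heven : h.Even) (hr : 0 < r) (hrn : r ^ (2 * k) = n) :
    ∫ θ, exp (-n * h θ) = 2 * (∫ v in Ici 0, exp (-scaledWell h k r v)) / r := by
  rw [integral_Ici_exp_neg_scaledWell hr hrn, zero_div,
    integral_eq_two_mul_integral_Ici_of_even fun θ => by rw [heven]]
  field_simp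

theorem integral_Ici_fieldDensity (heven : h.Even) (hr : 0 < r) (hrn : r ^ (2 * k) = n) (z : ℝ) :
    ∫ θ in Ici (z / r), fieldDensity h n θ = (∫ v in Ici z, exp (-scaledWell h k r v))
      / (2 * ∫ v in Ici 0, exp (-scaledWell h k r v)) := by
  simp only [fieldDensity]
  rw [integral_div, integral_exp_neg_mul_eq heven hr hrn, integral_Ici_exp_neg_scaledWell hr hrn z]
  field_simp

theorem fieldDensity_div (heven : h.Even) (hr : 0 < r) (hrn : r ^ (2 * k) = n) (z : ℝ) :
    fieldDensity h n (z / r) = r * exp (-scaledWell h k r z)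
      / (2 * ∫ v in Ici 0, exp (-scaledWell h k r v)) := by
  rw [fieldDensity, integral_exp_neg_mul_eq heven hr hrn, scaledWell, hrn, neg_mul]
  field_simp

theorem integrable_exp_neg_scaledWell (hr : 0 < r) (hrn : r ^ (2 * k) = n)
    (hint : Integrable fun θ => exp (-n * h θ)) :
    Integrable fun v => exp (-scaledWell h k r v) := by
  simpa only [scaledWell, hrn, neg_mul] using hint.comp_div hr.ne'

theorem IsFlatWell.exists_abs_scaledWell_sub_le_const (hw : IsFlatWell h k a) :
    ∃ C ≥ 0, ∀ κ ≥ 1, ∀ z ∈ Icc 0 κ, |scaledWell h k (κ ^ (k + 1)) z - a * z ^ (2 * k)| ≤ C := by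
  obtain ⟨C, hC, happrox⟩ := hw.exists_abs_scaledWell_sub_le
  refine ⟨C, hC, fun κ hκ z ⟨hz, hzκ⟩ => ?_⟩
  have hκ0 : 0 < κ := by linarith
  refine (happrox _ (by positivity) z hz).trans (mul_le_of_le_one_right hC ?_)
  rw [← pow_mul, show (k + 1) * 2 = 2 * k + 2 by ring, ← div_pow]
  exact pow_le_one₀ (by positivity) ((div_le_one hκ0).2 hzκ)

theorem IsFlatWell.exists_le_integral_exp_neg_scaledWell (hw : IsFlatWell h k a) :
    ∃ m > 0, ∀ κ ≥ 1, Integrable (fun v => exp (-scaledWell h k (κ ^ (k + 1)) v)) →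
      m ≤ ∫ v in Ici 0, exp (-scaledWell h k (κ ^ (k + 1)) v) := by
  obtain ⟨C, -, hC⟩ := hw.exists_abs_scaledWell_sub_le_const
  have ha := hw.coeff_pos
  refine ⟨exp (-(a + C)), exp_pos _, fun κ hκ hint => ?_⟩
  calc exp (-(a + C)) = ∫ _ in Icc (0 : ℝ) 1, exp (-(a + C)) := by simp
    _ ≤ ∫ v in Icc 0 1, exp (-scaledWell h k (κ ^ (k + 1)) v) := by
        refine setIntegral_mono_on (by simp) hint.integrableOn measurableSet_Icc
          fun v ⟨hv, hv1⟩ => ?_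
        have hle := (abs_le.1 (hC κ hκ v ⟨hv, hv1.trans hκ⟩)).2
        have hpow : a * v ^ (2 * k) ≤ a := mul_le_of_le_one_right ha.le (pow_le_one₀ hv hv1)
        exact exp_le_exp.2 (by linarith)
    _ ≤ _ := setIntegral_mono_set hint.integrableOn (ae_of_all _ fun _ => (exp_pos _).le)
        Icc_subset_Ici_self.eventuallyLE

theorem mul_add_mul_one_add_pow_le {z : ℝ} (hk : 2 ≤ k) (hr : 1 ≤ r) (hz : 0 ≤ z) (hzr : z ≤ r) :
    r * ((z / r) ^ (2 * k - 1) + 1 / r ^ (2 * k)) * (1 + z) ^ (2 * k - 1)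
      ≤ 2 * 2 ^ (4 * k) * ((1 + z ^ (2 * k + 2)) / r ^ 2) := by
  obtain ⟨j, rfl⟩ := Nat.exists_eq_add_of_le' hk
  rw [show 2 * (j + 2) - 1 = 2 * j + 3 by lia, show 2 * (j + 2) + 2 = 2 * j + 6 by lia]
  have hsum : (z / r) ^ (2 * j + 3) + 1 / r ^ (2 * (j + 2))
      ≤ 2 * ((1 + z) ^ (2 * j + 3) / r ^ (2 * j + 3)) := by
    rw [div_pow, two_mul (_ / _)]
    gcongr
    · linarith
    · exact one_le_pow₀ (by linarith)
    · lia
  calc r * ((z / r) ^ (2 * j + 3) + 1 / r ^ (2 * (j + 2))) * (1 + z) ^ (2 * j + 3)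
      ≤ r * (2 * ((1 + z) ^ (2 * j + 3) / r ^ (2 * j + 3))) * (1 + z) ^ (2 * j + 3) := by gcongr
    _ = 2 * ((1 + z) ^ (2 * j) * (1 + z) ^ (2 * j + 6) / r ^ (2 * j + 2)) := by field_simp; ring
    _ ≤ 2 * ((2 * r) ^ (2 * j) * (2 ^ (2 * j + 6) * (1 ^ (2 * j + 6) + z ^ (2 * j + 6)))
          / r ^ (2 * j + 2)) := by
        gcongr
        · linarith
        · exact add_pow_le_two_pow_mul zero_le_one hz _
    _ = 2 * 2 ^ (4 * j + 6) * ((1 + z ^ (2 * j + 6)) / r ^ 2) := by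
        rw [mul_pow, one_pow]; field_simp; ring
    _ ≤ _ := by
        gcongr
        exacts [one_le_two, by lia]

theorem IsFlatWell.exists_mul_exp_neg_scaledWell_le (hw : IsFlatWell h k a) (hk : 2 ≤ k) :
    ∃ D ≥ 0, ∀ κ ≥ 1, ∀ z ∈ Icc 0 κ, ∀ r, r = κ ^ (k + 1) →
      r * ((z / r) ^ (2 * k - 1) + 1 / r ^ (2 * k)) * exp (-scaledWell h k r z)
        ≤ D * ((1 + z ^ (2 * k + 2)) / r ^ 2) * monomialTail a k z := by
  obtain ⟨C, -, hC⟩ := hw.exists_abs_scaledWell_sub_le_const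
  refine ⟨2 * 2 ^ (4 * k) * (exp C * exp (2 * k * a)), by positivity,
    fun κ hκ z ⟨hz, hzκ⟩ r hr => ?_⟩
  have hκr : κ ≤ r := hr ▸ le_self_pow₀ hκ (by lia)
  have hr1 := hκ.le.trans hκr
  have : 0 < r := by linarith
  have hT := monomialTail_pos hw.coeff_pos (by lia : 1 ≤ k) hz
  have hexp : exp (-scaledWell h k r z)
      ≤ exp C * (exp (2 * k * a) * (1 + z) ^ (2 * k - 1) * monomialTail a k z) := by
    have hlow := (abs_le.1 (hC κ hκ z ⟨hz, hzκ⟩)).1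
    rw [← hr] at hlow
    calc exp (-scaledWell h k r z) ≤ exp C * exp (-(a * z ^ (2 * k))) := by
          rw [← exp_add]; gcongr; linarith
      _ ≤ _ := by gcongr; exact exp_neg_le_mul_monomialTail hw.coeff_pos (by lia) hz
  calc r * ((z / r) ^ (2 * k - 1) + 1 / r ^ (2 * k)) * exp (-scaledWell h k r z)
      ≤ r * ((z / r) ^ (2 * k - 1) + 1 / r ^ (2 * k))
          * (exp C * (exp (2 * k * a) * (1 + z) ^ (2 * k - 1) * monomialTail a k z)) := by gcongr
    _ = exp C * exp (2 * k * a) * monomialTail a k z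
          * (r * ((z / r) ^ (2 * k - 1) + 1 / r ^ (2 * k)) * (1 + z) ^ (2 * k - 1)) := by ring
    _ ≤ exp C * exp (2 * k * a) * monomialTail a k z
          * (2 * 2 ^ (4 * k) * ((1 + z ^ (2 * k + 2)) / r ^ 2)) :=
        mul_le_mul_of_nonneg_left (mul_add_mul_one_add_pow_le hk hr1 hz (hzκ.trans hκr))
          (by positivity)
    _ = _ := by ring

theorem pow_mul_div_pow_le_one {κ z : ℝ} (hk : 2 ≤ k) (hκ : 1 ≤ κ) (hz : z ∈ Icc 0 κ) :
    (κ ^ (k + 1)) ^ k * (z / κ ^ (k + 1)) ^ (2 * k - 1) ≤ 1 := by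
  obtain ⟨hz0, hzκ⟩ := hz
  have : 0 < κ := by linarith
  obtain ⟨j, rfl⟩ := Nat.exists_eq_add_of_le' hk
  rw [show 2 * (j + 2) - 1 = 2 * j + 3 by lia, div_pow]
  calc _ ≤ (κ ^ (j + 2 + 1)) ^ (j + 2) * (κ ^ (2 * j + 3) / (κ ^ (j + 2 + 1)) ^ (2 * j + 3)) := by
        gcongr
    _ = κ ^ (2 * j + 3) / κ ^ ((j + 3) * (j + 1)) := by field_simp; ring
    _ ≤ 1 := (div_le_one (by positivity)).2 (pow_le_pow_right₀ hκ (by nlinarith))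

end Rescaling

section RelativeError

theorem abs_two_mul_div_sub_one_le {p G G₀ T T₀ e q b m : ℝ} (hT : 0 < T) (hT₀ : 0 < T₀)
    (hm : 0 < m) (hG₀ : m ≤ G₀) (he : 0 ≤ e) (hqb : q ≤ b)
    (hp : |2 * G₀ * p - G| ≤ e * b * T) (hG : |G - T| ≤ e * b * T)
    (hGT₀ : |G₀ - T₀| ≤ e * q * T₀) :
    |2 * T₀ * p / T - 1| ≤ 3 * e * T₀ / m * b := by
  have hG₀' : 0 < G₀ := hm.trans_le hG₀
  have hsplit : (2 * T₀ * p / T - 1) * (T * G₀)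
      = (2 * G₀ * p - G) * T₀ + (G - T) * T₀ - (G₀ - T₀) * T := by field_simp; ring
  have hb : 0 ≤ e * b * T := (abs_nonneg _).trans hG
  have hbound : |2 * T₀ * p / T - 1| * (T * G₀) ≤ 3 * (e * b * T) * T₀ := by
    rw [← abs_of_pos (mul_pos hT hG₀'), ← abs_mul, hsplit]
    have hGT₀' : |G₀ - T₀| ≤ e * b * T₀ := hGT₀.trans (by gcongr)
    calc _ ≤ |2 * G₀ * p - G| * T₀ + |G - T| * T₀ + |G₀ - T₀| * T := by
          refine (abs_sub _ _).trans (add_le_add ((abs_add_le _ _).trans ?_) ?_) <;>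
            simp only [abs_mul, abs_of_pos hT, abs_of_pos hT₀, le_refl]
      _ ≤ e * b * T * T₀ + e * b * T * T₀ + e * b * T₀ * T := by gcongr
      _ = 3 * (e * b * T) * T₀ := by ring
  rw [← le_div_iff₀ (by positivity)] at hbound
  calc _ ≤ 3 * (e * b * T) * T₀ / (T * G₀) := hbound
    _ ≤ 3 * (e * b * T) * T₀ / (T * m) := by gcongr
    _ = 3 * e * T₀ / m * b := by field_simp

variable {ρ : Measure ℝ} [IsProbabilityMeasure ρ] {L a : ℝ} {k : ℕ}

theorem exists_abs_two_mul_measureReal_sub_integral_le (hL : ∀ᵐ x ∂ρ, x ∈ Icc (-L) L)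
    (hw : IsFlatWell (hfun ρ) k a) (hk : 2 ≤ k) :
    ∃ D ≥ 0, ∀ n : ℕ, n ≠ 0 → ∀ κ ≥ 1, ∀ z ∈ Icc 0 κ, ∀ r : ℝ,
      r = κ ^ (k + 1) → r ^ (2 * k) = n →
      |2 * (∫ v in Ici 0, exp (-scaledWell (hfun ρ) k r v))
          * (cwMeasure ρ n).real {x | n * (z / r) ≤ ∑ i, x i}
        - ∫ v in Ici z, exp (-scaledWell (hfun ρ) k r v)|
        ≤ D * ((1 + z ^ (2 * k + 2)) / r ^ 2) * monomialTail a k z := by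
  obtain ⟨D, hD, hcompare⟩ := exists_abs_measureReal_sub_setIntegral_le hL hw hk
  obtain ⟨D', hD', hlocal⟩ := hw.exists_mul_exp_neg_scaledWell_le hk
  obtain ⟨m, hm, hlower⟩ := hw.exists_le_integral_exp_neg_scaledWell
  refine ⟨D * D', by positivity, fun n hn κ hκ z hz r hr hrn => ?_⟩
  have hκr : κ ≤ r := hr ▸ le_self_pow₀ hκ (by lia)
  have hr0 : 0 < r := by linarith
  have hG₀ := hm.trans_le (hlower κ hκ (hr ▸ integrable_exp_neg_scaledWell hr0 hrn
    (integrable_exp_neg_mul_hfun hL hn)))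
  have hsqrt : √(n : ℝ) = r ^ k := by
    rw [← hrn, mul_comm, pow_mul, sqrt_sq (by positivity)]
  have hmass := hcompare n hn (z / r) ⟨div_nonneg hz.1 hr0.le, (div_le_one hr0).2 (hz.2.trans hκr)⟩
    (by rw [hsqrt, hr]; exact pow_mul_div_pow_le_one hk hκ hz)
  rw [integral_Ici_fieldDensity hw.even hr0 hrn, fieldDensity_div hw.even hr0 hrn, ← hrn] at hmass
  rw [← hr] at hG₀
  set G₀ := ∫ v in Ici 0, exp (-scaledWell (hfun ρ) k r v)
  set G := ∫ v in Ici z, exp (-scaledWell (hfun ρ) k r v)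
  set p := (cwMeasure ρ n).real {x | r ^ (2 * k) * (z / r) ≤ ∑ i, x i}
  rw [← hrn]
  calc |2 * G₀ * p - G| = |2 * G₀ * (p - G / (2 * G₀))| := by
        rw [mul_sub, mul_div_cancel₀ _ (by positivity)]
    _ = 2 * G₀ * |p - G / (2 * G₀)| := by rw [abs_mul, abs_of_pos (by positivity)]
    _ ≤ 2 * G₀ * (D * (((z / r) ^ (2 * k - 1) + 1 / r ^ (2 * k))
          * (r * exp (-scaledWell (hfun ρ) k r z) / (2 * G₀)))) := by gcongr
    _ = D * (r * ((z / r) ^ (2 * k - 1) + 1 / r ^ (2 * k))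
          * exp (-scaledWell (hfun ρ) k r z)) := by field_simp
    _ ≤ D * (D' * ((1 + z ^ (2 * k + 2)) / r ^ 2) * monomialTail a k z) :=
        mul_le_mul_of_nonneg_left (hlocal κ hκ z hz r hr) hD
    _ = _ := by ring

theorem exists_abs_measureReal_div_monomialTail_sub_one_le (hL : ∀ᵐ x ∂ρ, x ∈ Icc (-L) L)
    (hw : IsFlatWell (hfun ρ) k a) (hk : 2 ≤ k) :
    ∃ C > 0, ∀ n : ℕ, n ≠ 0 → ∀ κ ≥ 1, ∀ z ∈ Icc 0 κ, ∀ r : ℝ,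
      r = κ ^ (k + 1) → r ^ (2 * k) = n →
      |2 * monomialTail a k 0 * (cwMeasure ρ n).real {x | n * (z / r) ≤ ∑ i, x i}
          / monomialTail a k z - 1| ≤ C * ((1 + z ^ (2 * k + 2)) / r ^ 2) := by
  have hk1 : 1 ≤ k := by lia
  obtain ⟨D, hD, hcompare⟩ := exists_abs_two_mul_measureReal_sub_integral_le hL hw hk
  obtain ⟨D', hD', hlaplace⟩ := hw.exists_abs_integral_exp_neg_scaledWell_sub_le hk1
  obtain ⟨m, hm, hlower⟩ := hw.exists_le_integral_exp_neg_scaledWell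
  have hT₀ := monomialTail_pos hw.coeff_pos hk1 le_rfl
  refine ⟨3 * (D + D' + 1) * monomialTail a k 0 / m, by positivity,
    fun n hn κ hκ z hz r hr hrn => ?_⟩
  have hz0 : 0 ≤ z := hz.1
  have hT := monomialTail_pos hw.coeff_pos hk1 hz0
  have hr0 : 0 < r := hr ▸ by positivity
  refine abs_two_mul_div_sub_one_le hT hT₀ hm ?lower ?_ (q := 1 / r ^ 2) ?_
    ((hcompare n hn κ hκ z hz r hr hrn).trans ?_)
    ((hr ▸ hlaplace κ hκ z hz).trans ?_) ((hr ▸ hlaplace κ hκ 0 ⟨le_rfl, by linarith⟩).trans ?_)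
  case lower => exact hr ▸ hlower κ hκ (hr ▸ integrable_exp_neg_scaledWell hr0 hrn
    (integrable_exp_neg_mul_hfun hL hn))
  · positivity
  · gcongr
    exact le_add_of_nonneg_right (by positivity)
  · gcongr
    linarith
  · gcongr
    linarith
  · rw [zero_pow (by lia), add_zero]
    gcongr
    linarith

end RelativeError

section FinalScaling

theorem integral_exp_neg_mul_pow (a : ℝ) (k : ℕ) :
    ∫ v, exp (-(a * v ^ (2 * k))) = 2 * monomialTail a k 0 :=
  integral_eq_two_mul_integral_Ici_of_even fun v => by rw [(even_two_mul k).neg_pow]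

variable {k : ℕ} {x : ℝ}

theorem rpow_one_div_two_mul_pow (hk : k ≠ 0) (hx : 0 ≤ x) :
    (x ^ (1 / (2 * (k : ℝ)))) ^ (2 * k) = x := by
  simpa using rpow_inv_natCast_pow hx (by lia : 2 * k ≠ 0)

theorem rpow_one_div_mul_pow_succ (hx : 0 ≤ x) :
    (x ^ (1 / ((k : ℝ) * (2 * k + 2)))) ^ (k + 1) = x ^ (1 / (2 * (k : ℝ))) := by
  rw [← rpow_natCast, ← rpow_mul hx]
  congr 1
  push_cast
  field_simp

theorem rpow_neg_one_div_eq (hx : 0 ≤ x) :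
    x ^ (-1 / (k : ℝ)) = 1 / (x ^ (1 / (2 * (k : ℝ)))) ^ 2 := by
  rw [← rpow_natCast, ← rpow_mul hx, one_div, ← rpow_neg hx]
  congr 1
  push_cast
  field_simp

theorem le_mul_div_iff_mul_div_le {n r s z : ℝ} (hn : 0 < n) (hr : 0 < r) :
    z ≤ r * (s / n) ↔ n * (z / r) ≤ s := by
  rw [← div_le_iff₀' hr, le_div_iff₀' hn]

end FinalScaling

theorem stmt_3 (ρ : Measure ℝ) [IsProbabilityMeasure ρ] (L : ℝ) (k : ℕ) (c₁ : ℝ)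
    -- `ρ` is symmetric
    (hsym : ρ.map (fun x => -x) = ρ)
    -- `∫ x² dρ = 1`
    (hvar : (∫ x, x ^ 2 ∂ρ) = 1)
    -- compact support: `ρ([-L, L]) = 1`
    (hL : ρ (Set.Icc (-L) L) = 1)
    -- `h'(s) = 0` has the unique root `s = 0`
    (hroot : ∀ s : ℝ, deriv (hfun ρ) s = 0 ↔ s = 0)
    (hk : 2 ≤ k)
    (hder : ∀ i : ℕ, i ≤ 2 * k - 1 → iteratedDeriv i (hfun ρ) 0 = 0)
    (hpos : 0 < iteratedDeriv (2 * k) (hfun ρ) 0)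
    -- `c₁` is the normalizing constant of the density of `Y`
    (hc₁ : (∫ y : ℝ, c₁ * Real.exp (-(iteratedDeriv (2 * k) (hfun ρ) 0 * y ^ (2 * k)
        / (Nat.factorial (2 * k))))) = 1) :
    ∃ C : ℝ, 0 < C ∧ ∀ n : ℕ, 1 ≤ n → ∀ z : ℝ, 0 < z →
      z < (n : ℝ) ^ ((1 : ℝ) / ((k : ℝ) * (2 * (k : ℝ) + 2))) →
      |(cwMeasure ρ n {x | z ≤ (n : ℝ) ^ ((1 : ℝ) / (2 * (k : ℝ))) * ((∑ i, x i) / n)}).toReal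
          / (∫ y in Set.Ici z, c₁ * Real.exp (-(iteratedDeriv (2 * k) (hfun ρ) 0 * y ^ (2 * k)
              / (Nat.factorial (2 * k))))) - 1|
        ≤ C * (n : ℝ) ^ (-(1 : ℝ) / (k : ℝ)) * (1 + z ^ (2 * k + 2)) := by
  have hsupp : ∀ᵐ x ∂ρ, x ∈ Icc (-L) L := (mem_ae_iff_prob_eq_one measurableSet_Icc).2 hL
  have hw := isFlatWell_hfun hsupp hsym (fun s => (hroot s).1) (by lia) hder hpos
  obtain ⟨C, hC, hratio⟩ := exists_abs_measureReal_div_monomialTail_sub_one_le hsupp hw hk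
  simp_rw [mul_div_right_comm] at hc₁ ⊢
  set a := iteratedDeriv (2 * k) (hfun ρ) 0 / (2 * k).factorial
  rw [integral_const_mul, integral_exp_neg_mul_pow] at hc₁
  refine ⟨C, hC, fun n hn z hz hzκ => ?_⟩
  have hn0 : (0 : ℝ) < n := by positivity
  have hκ : 1 ≤ (n : ℝ) ^ (1 / ((k : ℝ) * (2 * k + 2))) :=
    one_le_rpow (by exact_mod_cast hn) (by positivity)
  have herror := hratio n (by lia) _ hκ z ⟨hz.le, hzκ.le⟩ _ (rpow_one_div_mul_pow_succ hn0.le).symm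
    (rpow_one_div_two_mul_pow (by lia) hn0.le)
  have hdensity : ∫ y in Ici z, c₁ * exp (-(a * y ^ (2 * k)))
      = monomialTail a k z / (2 * monomialTail a k 0) := by
    rw [integral_const_mul, eq_one_div_of_mul_eq_one_left hc₁, one_div_mul_eq_div]; rfl
  simp_rw [← le_mul_div_iff_mul_div_le hn0 (rpow_pos_of_pos hn0 _)] at herror
  rw [hdensity, rpow_neg_one_div_eq hn0.le, ← measureReal_def, div_div_eq_mul_div,
    mul_comm _ (2 * _)]
  exact herror.trans_eq (by ring)
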